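/- arXiv:1502.06795 — 6 statements merged into one kernel-verified Lean document; each statement's English description precedes it below -/
import Mathlib

section
/- Let X and Y be complex Banach spaces, let O ⊆ X be an open set, and let u : O → Y be holomorphic on O (i.e., u has a complex Fréchet derivative at each point of O) and uniformly bounded: sup_{x∈O} ‖u(x)‖_Y ≤ B for some finite B. Let K ⊆ O be a compact subset of X. Then for every s > 1 and every t < s − 1, if sup_{n≥1} n^s d_n(K)_X < ∞ then sup_{n≥1} n^t d_n(u(K))_Y < ∞, where u(K) := {u(x) : x ∈ K}. -/
/-- The Kolmogorov `n`-width of a subset `K` of a complex normed space `X`: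
the infimum over all `n`-dimensional subspaces `W` of `X` of the deviation
`sup_{v ∈ K} inf_{w ∈ W} ‖v - w‖`. -/
noncomputable def kolWidth {X : Type*} [NormedAddCommGroup X] [NormedSpace ℂ X]
    (n : ℕ) (K : Set X) : ℝ :=
  ⨅ W : {W : Submodule ℂ X // Module.finrank ℂ ↥W = n},
    ⨆ x : K, ⨅ w : ↥W.1, ‖(x : X) - (w : X)‖

section KolmogorovHelpers

open Metric Set Filter Topology

section AnalyticPart

variable {E F : Type*} [NormedAddCommGroup E] [NormedSpace ℂ E]
  [NormedAddCommGroup F] [NormedSpace ℂ F]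

lemma holo_cauchy {f : E → F} {c : E} {R M : ℝ} (hR : 0 < R)
    (hd : DifferentiableOn ℂ f (ball c R)) (hM : ∀ z ∈ ball c R, ‖f z‖ ≤ M) :
    ‖fderiv ℂ f c‖ ≤ 2 * M / R := by
  refine Complex.norm_fderiv_le_div_of_mapsTo_ball hd ?_ hR
  intro z hz
  rw [mem_closedBall, dist_eq_norm]
  have h1 := hM z hz
  have h2 := hM c (mem_ball_self hR)
  have h3 := norm_sub_le (f z) (f c)
  linarith

lemma holo_quad {f : E → F} {c z : E} {R M : ℝ}
    (hd : DifferentiableOn ℂ f (ball c R)) (hM : ∀ z ∈ ball c R, ‖f z‖ ≤ M)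
    (hz : z ∈ ball c R) :
    ‖f z - f c - fderiv ℂ f c (z - c)‖ ≤ 4 * M * (‖z - c‖ / R) ^ 2 := by
  have hR : 0 < R := nonempty_ball.mp ⟨_, hz⟩
  have hfd : DifferentiableAt ℂ f c := hd.differentiableAt (ball_mem_nhds c hR)
  set r : E → F := fun z => f z - f c - fderiv ℂ f c (z - c) with hr
  have hrc : r c = 0 := by simp [hr]
  have key := Complex.dist_le_mul_div_pow_of_mapsTo_ball_of_isLittleO (f := r) (c := c) (z := z)
    (R₁ := R) (R₂ := 4 * M) (n := 1) ?_ ?_ ?_ hz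
  · rw [hrc, dist_zero_right, dist_eq_norm] at key
    exact key
  · have : Differentiable ℂ (fun z => fderiv ℂ f c (z - c)) := by fun_prop
    exact (hd.sub_const _).sub this.differentiableOn
  · intro w hw
    rw [hrc, mem_closedBall, dist_zero_right]
    have h1 := hM w hw
    have h2 := hM c (mem_ball_self hR)
    have h3 := norm_sub_le (f w - f c) (fderiv ℂ f c (w - c))
    have h4 := norm_sub_le (f w) (f c)
    have h5 : ‖fderiv ℂ f c (w - c)‖ ≤ 2 * M / R * R := by
      refine ((fderiv ℂ f c).le_opNorm _).trans ?_
      have hw' : ‖w - c‖ ≤ R := by rw [← dist_eq_norm]; exact hw.le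
      have := holo_cauchy hR hd hM
      gcongr
      exact (norm_nonneg _).trans this
    have h6 : 2 * M / R * R = 2 * M := by field_simp
    simp only [hr]
    linarith
  · have := hfd.hasFDerivAt.isLittleO
    simp only [hrc, sub_zero, pow_one]
    exact this.norm_right

lemma exists_ball_bdd {f : E → F} {O : Set E} (hO : IsOpen O) (hd : DifferentiableOn ℂ f O)
    {x : E} (hx : x ∈ O) : ∃ R > 0, ∃ M : ℝ, ball x R ⊆ O ∧ ∀ z ∈ ball x R, ‖f z‖ ≤ M := by
  have hc : ContinuousAt f x := hd.continuousOn.continuousAt (hO.mem_nhds hx)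
  have h1 : ∀ᶠ z in 𝓝 x, ‖f z‖ < ‖f x‖ + 1 :=
    hc.norm.eventually (gt_mem_nhds (by linarith))
  obtain ⟨R, hR, h⟩ := Metric.eventually_nhds_iff_ball.1 (h1.and (hO.mem_nhds hx))
  exact ⟨R, hR, ‖f x‖ + 1, fun z hz => (h z hz).2, fun z hz => (h z hz).1.le⟩

lemma kol_sub_ball {x y : E} {a b c : ℝ} (hy : y ∈ ball x a) (h : a + b ≤ c) :
    ball y b ⊆ ball x c := by
  apply ball_subset_ball'
  have := mem_ball.1 hy
  linarith

lemma holo_fderiv_apply [CompleteSpace F] {f : E → F} {O : Set E} (hO : IsOpen O)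
    (hd : DifferentiableOn ℂ f O) (v : E) :
    DifferentiableOn ℂ (fun y => fderiv ℂ f y v) O := by
  intro x hx
  apply DifferentiableAt.differentiableWithinAt
  obtain ⟨R3, hR3, M, hsub, hM⟩ := exists_ball_bdd hO hd hx
  obtain ⟨R, hR, rfl⟩ : ∃ R > 0, R3 = 3 * R := ⟨R3 / 3, by positivity, by ring⟩
  have hM0 : 0 ≤ M := (norm_nonneg _).trans (hM x (mem_ball_self hR3))
  have hdb : DifferentiableOn ℂ f (ball x (3 * R)) := hd.mono hsub
  -- step size
  obtain ⟨N, hN⟩ := exists_nat_gt (‖v‖ / R)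
  have hNpos : 0 < N := by
    have : (0:ℝ) < N := lt_of_le_of_lt (by positivity) hN
    exact_mod_cast this
  let e : ℕ → ℂ := fun n => ((n + N : ℕ) : ℂ)⁻¹
  have he_norm : ∀ n, ‖e n‖ = ((n + N : ℕ) : ℝ)⁻¹ := by
    intro n; simp only [e, norm_inv, Complex.norm_natCast]
  have hpos : ∀ n, (0:ℝ) < ((n + N : ℕ) : ℝ) := by intro n; exact_mod_cast (by omega)
  have he0 : ∀ n, e n ≠ 0 := by
    intro n h
    have := he_norm n
    rw [h, norm_zero] at this
    have h2 := inv_pos.2 (hpos n)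
    linarith
  have he_small : ∀ n, ‖e n • v‖ < R := by
    intro n
    rw [norm_smul, he_norm, inv_mul_lt_iff₀ (hpos n)]
    rw [div_lt_iff₀ hR] at hN
    have : (N:ℝ) ≤ ((n + N : ℕ) : ℝ) := by push_cast; linarith [(Nat.cast_nonneg n : (0:ℝ) ≤ n)]
    nlinarith
  have he_lim : Tendsto (fun n => ‖e n‖) atTop (𝓝 0) := by
    simp_rw [he_norm]
    exact tendsto_inv_atTop_zero.comp
      (tendsto_natCast_atTop_atTop.comp (tendsto_add_atTop_nat N))
  let φ : ℕ → E → F := fun n y => (e n)⁻¹ • (f (y + e n • v) - f y)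
  let G : E → F := fun y => fderiv ℂ f y v
  have hφd : ∀ n, DifferentiableOn ℂ (φ n) (ball x R) := by
    intro n
    apply DifferentiableOn.const_smul
    apply DifferentiableOn.sub
    · refine hdb.comp (by fun_prop) ?_
      intro y hy
      have : y + e n • v ∈ ball y R := by simpa [dist_eq_norm] using he_small n
      exact kol_sub_ball hy (by linarith) this
    · exact hdb.mono (ball_subset_ball (by linarith))
  -- uniform convergence
  set A := 4 * M * (‖v‖ / R) ^ 2 with hA
  have hA0 : 0 ≤ A := by positivity
  have hφG : ∀ n, ∀ y ∈ ball x (2 * R), ‖φ n y - G y‖ ≤ A * ‖e n‖ := by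
    intro n y hy
    have hb : ball y R ⊆ ball x (3 * R) := kol_sub_ball hy (by linarith)
    have hmem : y + e n • v ∈ ball y R := by simpa [dist_eq_norm] using he_small n
    have := holo_quad (hdb.mono hb) (fun z hz => hM z (hb hz)) hmem
    have heq : φ n y - G y = (e n)⁻¹ • (f (y + e n • v) - f y
        - fderiv ℂ f y (y + e n • v - y)) := by
      simp only [φ, G, add_sub_cancel_left, map_smul, smul_sub, inv_smul_smul₀ (he0 n)]
    rw [heq, norm_smul, norm_inv]
    have hen : 0 < ‖e n‖ := norm_pos_iff.2 (he0 n)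
    rw [inv_mul_le_iff₀ hen]
    refine this.trans (le_of_eq ?_)
    rw [add_sub_cancel_left, norm_smul, hA]
    ring
  have hGb : ∀ y ∈ ball x R, ‖G y‖ ≤ 2 * M / R * ‖v‖ := by
    intro y hy
    have hb : ball y R ⊆ ball x (3 * R) := kol_sub_ball hy (by linarith)
    exact ((fderiv ℂ f y).le_opNorm v).trans (by
      gcongr; exact holo_cauchy hR (hdb.mono hb) (fun z hz => hM z (hb hz)))
  have hR2 : ball x R ⊆ ball x (2 * R) := ball_subset_ball (by linarith)
  have he1 : ∀ n, ‖e n‖ ≤ 1 := by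
    intro n; rw [he_norm]; apply inv_le_one_of_one_le₀
    exact_mod_cast (by omega)
  set M' := A + 2 * M / R * ‖v‖ with hM'
  have hφb : ∀ n, ∀ y ∈ ball x R, ‖φ n y‖ ≤ M' := by
    intro n y hy
    have h1 := hφG n y (hR2 hy)
    have h2 := hGb y hy
    have h3 : φ n y = (φ n y - G y) + G y := by abel
    rw [h3]
    refine (norm_add_le _ _).trans ?_
    have := mul_le_mul_of_nonneg_left (he1 n) hA0
    linarith
  -- derivatives are Cauchy
  have hcau : CauchySeq (fun n => fderiv ℂ (φ n) x) := by
    rw [Metric.cauchySeq_iff']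
    intro ε hε
    have hlim : Tendsto (fun n => 4 * A / R * ‖e n‖) atTop (𝓝 0) := by
      simpa using he_lim.const_mul (4 * A / R)
    obtain ⟨n0, hn0⟩ := (hlim.eventually (gt_mem_nhds hε)).exists
    refine ⟨n0, fun n hn => ?_⟩
    have hx' := ball_mem_nhds x hR
    have hmono : ‖e n‖ ≤ ‖e n0‖ := by
      rw [he_norm, he_norm]
      apply inv_anti₀ (hpos n0)
      exact_mod_cast (by omega)
    rw [dist_eq_norm, ← fderiv_sub ((hφd n).differentiableAt hx')
      ((hφd n0).differentiableAt hx')]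
    refine lt_of_le_of_lt (holo_cauchy (M := 2 * A * ‖e n0‖) hR ((hφd n).sub (hφd n0)) ?_) ?_
    · intro z hz
      have h1 := hφG n z (hR2 hz)
      have h2 := hφG n0 z (hR2 hz)
      have h3 : (φ n - φ n0) z = (φ n z - G z) - (φ n0 z - G z) := by simp
      rw [h3]
      refine (norm_sub_le _ _).trans ?_
      have := mul_le_mul_of_nonneg_left hmono hA0
      linarith
    · refine lt_of_le_of_lt (le_of_eq ?_) hn0
      ring
  obtain ⟨T, hT⟩ := cauchySeq_tendsto_of_complete hcau
  have hptw : ∀ y ∈ ball x R, Tendsto (fun n => φ n y) atTop (𝓝 (G y)) := by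
    intro y hy
    rw [tendsto_iff_norm_sub_tendsto_zero]
    refine squeeze_zero (fun _ => norm_nonneg _) (fun n => hφG n y (hR2 hy)) ?_
    simpa using he_lim.const_mul A
  have hquad : ∀ y ∈ ball x R, ‖G y - G x - T (y - x)‖ ≤ 4 * M' * (‖y - x‖ / R) ^ 2 := by
    intro y hy
    have hl : Tendsto (fun n => φ n y - φ n x - fderiv ℂ (φ n) x (y - x)) atTop
        (𝓝 (G y - G x - T (y - x))) := by
      refine ((hptw y hy).sub (hptw x (mem_ball_self hR))).sub ?_
      exact ((ContinuousLinearMap.apply ℂ F (y - x)).continuous.tendsto T).comp hT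
    exact le_of_tendsto hl.norm (Eventually.of_forall fun n => holo_quad (hφd n) (hφb n) hy)
  refine HasFDerivAt.differentiableAt (f' := T) ?_
  refine HasFDerivAt.of_isLittleO ?_
  have hO2 : (fun y => G y - G x - T (y - x)) =O[𝓝 x] fun y => ‖y - x‖ ^ 2 := by
    refine Asymptotics.IsBigO.of_bound (4 * M' / R ^ 2) ?_
    filter_upwards [ball_mem_nhds x hR] with y hy
    refine (hquad y hy).trans (le_of_eq ?_)
    rw [norm_pow, norm_norm]; ring
  refine hO2.trans_isLittleO ?_
  exact Asymptotics.isLittleO_pow_sub_sub x (by norm_num)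

lemma holo_fderiv [CompleteSpace F] {f : E → F} {O : Set E} (hO : IsOpen O)
    (hd : DifferentiableOn ℂ f O) : DifferentiableOn ℂ (fderiv ℂ f) O := by
  intro x hx
  apply DifferentiableAt.differentiableWithinAt
  obtain ⟨R3, hR3, M, hsub, hM⟩ := exists_ball_bdd hO hd hx
  obtain ⟨R, hR, rfl⟩ : ∃ R > 0, R3 = 2 * R := ⟨R3 / 2, by positivity, by ring⟩
  have hM0 : 0 ≤ M := (norm_nonneg _).trans (hM x (mem_ball_self hR3))
  have hdb : DifferentiableOn ℂ f (ball x (2 * R)) := hd.mono hsub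
  have hGd : ∀ v, DifferentiableOn ℂ (fun y => fderiv ℂ f y v) (ball x R) := fun v =>
    (holo_fderiv_apply hO hd v).mono ((ball_subset_ball (by linarith)).trans hsub)
  have hGb : ∀ v, ∀ y ∈ ball x R, ‖fderiv ℂ f y v‖ ≤ 2 * M / R * ‖v‖ := by
    intro v y hy
    have hb : ball y R ⊆ ball x (2 * R) := kol_sub_ball hy (by linarith)
    exact ((fderiv ℂ f y).le_opNorm v).trans (by
      gcongr; exact holo_cauchy hR (hdb.mono hb) (fun z hz => hM z (hb hz)))
  have hGx : ∀ v, DifferentiableAt ℂ (fun y => fderiv ℂ f y v) x := fun v =>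
    (hGd v).differentiableAt (ball_mem_nhds x hR)
  let L : E →ₗ[ℂ] (E →L[ℂ] F) :=
    { toFun := fun v => fderiv ℂ (fun y => fderiv ℂ f y v) x
      map_add' := by
        intro v w
        rw [← fderiv_add (hGx v) (hGx w)]
        congr 1
        ext y
        simp
      map_smul' := by
        intro c v
        rw [RingHom.id_apply, ← fderiv_const_smul (hGx v) c]
        congr 1
        ext y
        simp }
  let T : E →L[ℂ] (E →L[ℂ] F) := L.mkContinuous (4 * M / R ^ 2) (by
    intro v
    refine (holo_cauchy hR (hGd v) (hGb v)).trans (le_of_eq ?_)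
    field_simp
    ring)
  refine HasFDerivAt.differentiableAt (f' := T.flip) ?_
  refine HasFDerivAt.of_isLittleO ?_
  have hO2 : (fun y => fderiv ℂ f y - fderiv ℂ f x - T.flip (y - x)) =O[𝓝 x]
      fun y => ‖y - x‖ ^ 2 := by
    refine Asymptotics.IsBigO.of_bound (8 * M / R ^ 3) ?_
    filter_upwards [ball_mem_nhds x hR] with y hy
    refine ContinuousLinearMap.opNorm_le_bound _ (by positivity) ?_
    intro v
    refine (holo_quad (hGd v) (hGb v) hy).trans (le_of_eq ?_)
    rw [norm_pow, norm_norm]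
    field_simp
    ring
  refine hO2.trans_isLittleO ?_
  exact Asymptotics.isLittleO_pow_sub_sub x (by norm_num)

/-- The currying isometry, with simplified types. -/
noncomputable def kolCurry (E F : Type*) [NormedAddCommGroup E] [NormedSpace ℂ E]
    [NormedAddCommGroup F] [NormedSpace ℂ F] (m : ℕ) :
    (E →L[ℂ] (ContinuousMultilinearMap ℂ (fun _ : Fin m => E) F)) ≃ₗᵢ[ℂ]
      (ContinuousMultilinearMap ℂ (fun _ : Fin (m + 1) => E) F) :=
  (continuousMultilinearCurryLeftEquiv ℂ (fun _ => E) F).symm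

lemma holo_iterated [CompleteSpace F] {f : E → F} {O : Set E} (hO : IsOpen O)
    (hd : DifferentiableOn ℂ f O) (m : ℕ) : DifferentiableOn ℂ (iteratedFDeriv ℂ m f) O := by
  induction m with
  | zero =>
    rw [iteratedFDeriv_zero_eq_comp]
    exact (LinearIsometryEquiv.differentiable _).comp_differentiableOn hd
  | succ m ih =>
    have h1 := holo_fderiv hO ih
    have h2 : iteratedFDeriv ℂ (m + 1) f =
      fun x => kolCurry E F m (fderiv ℂ (iteratedFDeriv ℂ m f) x) := rfl
    rw [h2]
    fun_prop

lemma holo_iterated_bound_aux [CompleteSpace F] {f : E → F} {x₀ : E} {R B ρ : ℝ} (hρ : 0 < ρ)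
    (hd : DifferentiableOn ℂ f (ball x₀ R)) (hB : ∀ z ∈ ball x₀ R, ‖f z‖ ≤ B) (m : ℕ) :
    ∀ x ∈ ball x₀ (R - m * ρ), ‖iteratedFDeriv ℂ m f x‖ ≤ B * (2 / ρ) ^ m := by
  induction m with
  | zero => intro x hx; simpa using hB x (by simpa using hx)
  | succ m ih =>
    intro x hx
    rw [← norm_fderiv_iteratedFDeriv]
    have hb : ball x ρ ⊆ ball x₀ (R - m * ρ) := kol_sub_ball hx (by push_cast; linarith)
    have hb2 : ball x₀ (R - m * ρ) ⊆ ball x₀ R := ball_subset_ball (by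
      have : 0 ≤ m * ρ := by positivity
      linarith)
    refine (holo_cauchy hρ ((holo_iterated isOpen_ball hd m).mono (hb.trans hb2))
      (fun z hz => ih z (hb hz))).trans (le_of_eq ?_)
    rw [pow_succ]; ring

lemma holo_iterated_bound [CompleteSpace F] {f : E → F} {x₀ : E} {R B : ℝ} (hR : 0 < R)
    (hd : DifferentiableOn ℂ f (ball x₀ R)) (hB : ∀ z ∈ ball x₀ R, ‖f z‖ ≤ B) (m : ℕ) :
    ‖((m.factorial : ℂ)⁻¹) • iteratedFDeriv ℂ m f x₀‖
      ≤ (B * Real.exp 1) * (2 * Real.exp 1 / R) ^ m := by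
  have hB0 : 0 ≤ B := (norm_nonneg _).trans (hB x₀ (mem_ball_self hR))
  have hm : (0:ℝ) < m + 1 := by positivity
  have h1 := holo_iterated_bound_aux (ρ := R / (m + 1)) (by positivity) hd hB m x₀ (by
    apply mem_ball_self
    have : m * (R / (m + 1)) < R := by
      rw [← mul_div_assoc, div_lt_iff₀ hm]; linarith
    linarith)
  have h2 := Real.pow_div_factorial_le_exp (m + 1 : ℝ) hm.le m
  rw [norm_smul, norm_inv, Complex.norm_natCast]
  have hf : (0:ℝ) < m.factorial := by exact_mod_cast m.factorial_pos
  calc (m.factorial : ℝ)⁻¹ * ‖iteratedFDeriv ℂ m f x₀‖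
      ≤ (m.factorial : ℝ)⁻¹ * (B * (2 / (R / (m + 1))) ^ m) := by gcongr
    _ = B * (2 / R) ^ m * ((m + 1 : ℝ) ^ m / m.factorial) := by
        rw [div_div_eq_mul_div, mul_div_right_comm, mul_pow]; ring
    _ ≤ B * (2 / R) ^ m * Real.exp (m + 1) := by gcongr
    _ = _ := by
        rw [Real.exp_add, ← Real.exp_one_pow m, div_pow, div_pow, mul_pow]; ring

lemma holo_hasSum [CompleteSpace F] {f : E → F} {x₀ h : E} {R : ℝ}
    (hd : DifferentiableOn ℂ f (ball x₀ R)) (hh : ‖h‖ < R) :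
    HasSum (fun m : ℕ => ((m.factorial : ℂ)⁻¹ • iteratedFDeriv ℂ m f x₀) (fun _ => h))
      (f (x₀ + h)) := by
  have hR : 0 < R := (norm_nonneg h).trans_lt hh
  set r : ℝ := 2 * R / (R + ‖h‖) with hr
  have hpos : 0 < R + ‖h‖ := by positivity
  have hr1 : 1 < r := by rw [hr, lt_div_iff₀ hpos]; linarith
  have hrR : r * ‖h‖ ≤ R := by
    rw [hr, div_mul_eq_mul_div, div_le_iff₀ hpos]; nlinarith
  have hmaps : ∀ ζ ∈ ball (0:ℂ) r, x₀ + ζ • h ∈ ball x₀ R := by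
    intro ζ hζ
    rw [mem_ball_zero_iff] at hζ
    rw [mem_ball, dist_eq_norm, add_sub_cancel_left, norm_smul]
    rcases (norm_nonneg h).eq_or_lt with h0 | h0
    · rw [← h0]; simpa using hR
    · exact lt_of_lt_of_le (mul_lt_mul_of_pos_right hζ h0) hrR
  set g : ℂ → F := fun ζ => f (x₀ + ζ • h) with hg
  have hgd : DifferentiableOn ℂ g (ball 0 r) :=
    hd.comp (by fun_prop) hmaps
  have hit : ∀ m : ℕ, ∀ ζ ∈ ball (0:ℂ) r,
      iteratedDeriv m g ζ = iteratedFDeriv ℂ m f (x₀ + ζ • h) (fun _ => h) := by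
    intro m
    induction m with
    | zero => intro ζ _; simp [hg]
    | succ m ih =>
      intro ζ hζ
      rw [iteratedDeriv_succ]
      have hev : iteratedDeriv m g =ᶠ[𝓝 ζ]
          fun ζ => iteratedFDeriv ℂ m f (x₀ + ζ • h) (fun _ => h) := by
        filter_upwards [isOpen_ball.mem_nhds hζ] with w hw using ih w hw
      rw [hev.deriv_eq]
      have hD : HasFDerivAt (iteratedFDeriv ℂ m f)
          (fderiv ℂ (iteratedFDeriv ℂ m f) (x₀ + ζ • h)) (x₀ + ζ • h) :=
        ((holo_iterated isOpen_ball hd m).differentiableAt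
          (isOpen_ball.mem_nhds (hmaps ζ hζ))).hasFDerivAt
      have hl : HasDerivAt (fun ζ : ℂ => x₀ + ζ • h) h ζ := by
        simpa using ((hasDerivAt_id ζ).smul_const h).const_add x₀
      have h1 := hD.comp_hasDerivAt ζ hl
      have h2 := ((ContinuousMultilinearMap.apply ℂ (fun _ : Fin m => E) F
        (fun _ => h)).hasFDerivAt).comp_hasDerivAt ζ h1
      have h3 := h2.deriv
      rw [iteratedFDeriv_succ_apply_left]
      exact h3
  have hs := Complex.hasSum_taylorSeries_on_ball hgd (z := 1) (by simpa using hr1)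
  have h1 : g 1 = f (x₀ + h) := by simp [hg]
  rw [h1] at hs
  convert hs using 2 with m
  rw [hit m 0 (mem_ball_self (by linarith))]
  simp

end AnalyticPart

section WordPart

variable {X Y : Type*} [NormedAddCommGroup X] [NormedSpace ℂ X]
  [NormedAddCommGroup Y] [NormedSpace ℂ Y]

/-- `U` is finite-dimensional of dimension at most `d`. -/
def KolDim {Y : Type*} [NormedAddCommGroup Y] [NormedSpace ℂ Y] (U : Submodule ℂ Y) (d : ℝ) :
    Prop :=
  FiniteDimensional ℂ U ∧ (Module.finrank ℂ U : ℝ) ≤ d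

lemma KolDim.mono {U : Submodule ℂ Y} {d d' : ℝ} (h : KolDim U d) (hd : d ≤ d') : KolDim U d' :=
  ⟨h.1, h.2.trans hd⟩

lemma KolDim.sup {U V : Submodule ℂ Y} {d e : ℝ} (hU : KolDim U d) (hV : KolDim V e) :
    KolDim (U ⊔ V) (d + e) := by
  have := hU.1
  have := hV.1
  refine ⟨inferInstance, ?_⟩
  have h := Submodule.finrank_add_le_finrank_add_finrank U V
  have h' : (Module.finrank ℂ ↥(U ⊔ V) : ℝ) ≤ Module.finrank ℂ U + Module.finrank ℂ V := by
    exact_mod_cast h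
  linarith [hU.2, hV.2]

lemma KolDim.bot : KolDim (⊥ : Submodule ℂ Y) 0 := ⟨inferInstance, by simp⟩

lemma KolDim.finset_sup {ι : Type*} (s : Finset ι) (U : ι → Submodule ℂ Y) (d : ι → ℝ)
    (h : ∀ i ∈ s, KolDim (U i) (d i)) : KolDim (s.sup U) (∑ i ∈ s, d i) := by
  classical
  induction s using Finset.induction_on with
  | empty => simpa using KolDim.bot
  | insert a s ha ih =>
    rw [Finset.sup_insert, Finset.sum_insert ha]
    exact (h a (Finset.mem_insert_self _ _)).sup
      (ih fun i hi => h i (Finset.mem_insert_of_mem hi))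

lemma multilinear_range {m : ℕ} (p : ContinuousMultilinearMap ℂ (fun _ : Fin m => X) Y)
    (V : Fin m → Submodule ℂ X) (d : Fin m → ℝ) (hV : ∀ i, KolDim (V i) (d i)) :
    ∃ U : Submodule ℂ Y, KolDim U (∏ i, d i) ∧ ∀ v : Fin m → X, (∀ i, v i ∈ V i) → p v ∈ U := by
  have : ∀ i, FiniteDimensional ℂ (V i) := fun i => (hV i).1
  let b := fun i => Module.finBasis ℂ (V i)
  let g : ((i : Fin m) → Fin (Module.finrank ℂ (V i))) → Y := fun r => p fun i => (b i (r i) : X)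
  refine ⟨Submodule.span ℂ (range g), ⟨FiniteDimensional.span_of_finite ℂ (finite_range g), ?_⟩, ?_⟩
  · have h1 := finrank_range_le_card (R := ℂ) g
    rw [Set.finrank] at h1
    have h2 : (Module.finrank ℂ (Submodule.span ℂ (range g)) : ℝ) ≤
        ∏ i, (Module.finrank ℂ (V i) : ℝ) := by
      have h3 : Fintype.card ((i : Fin m) → Fin (Module.finrank ℂ (V i))) =
        ∏ i, Module.finrank ℂ (V i) := by simp
      rw [h3] at h1
      exact_mod_cast h1
    refine h2.trans (Finset.prod_le_prod (fun i _ => by positivity) fun i _ => (hV i).2)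
  · intro v hv
    have hvi : v = fun i => ∑ j, ((b i).repr ⟨v i, hv i⟩ j) • ((b i j : V i) : X) := by
      funext i
      have := congrArg (Submodule.subtype (V i)) ((b i).sum_repr ⟨v i, hv i⟩)
      rw [map_sum] at this
      exact this.symm
    rw [hvi, p.map_sum]
    refine Submodule.sum_mem _ fun r _ => ?_
    rw [p.map_smul_univ]
    exact Submodule.smul_mem _ _ (Submodule.subset_span ⟨r, rfl⟩)

/-- The words of length `m` in the letters `k0, …, L` with total weight at most `L`. -/
noncomputable def kolWords (k0 L m : ℕ) : Finset (Fin m → ℕ) :=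
  (Fintype.piFinset fun _ : Fin m => Finset.Ico k0 (L + 1)).filter fun κ => ∑ i, κ i ≤ L

lemma kol_core (p : (m : ℕ) → ContinuousMultilinearMap ℂ (fun _ : Fin m => X) Y)
    {M a α ρ : ℝ} (hM : 0 ≤ M) (ha : 0 ≤ a) (hp : ∀ m, ‖p m‖ ≤ M * a ^ m)
    (hα : 0 < α) (hα1 : α < 1) (hρ : 0 < ρ) (hρ1 : ρ ≤ 1)
    {k0 L : ℕ} (hk0 : 1 ≤ k0) (hsum : ∑ k ∈ Finset.Ico k0 (L + 1), α ^ k ≤ 1 / 2)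
    (hα2 : ∀ k, k0 ≤ k → 2 * α ^ k ≤ 1)
    (V : ℕ → Submodule ℂ X) (hV : ∀ k ∈ Finset.Ico k0 (L + 1), KolDim (V k) (2 ^ (k + 1))) :
    ∃ U : Submodule ℂ Y, KolDim U (2 * (2 / α ^ 2) ^ L) ∧
      ∀ v : ℕ → X, (∀ k ∈ Finset.Ico k0 (L + 1), v k ∈ V k ∧ a * ‖v k‖ ≤ (ρ * α) ^ k) →
      ∀ y : Y, HasSum (fun m => p m fun _ => ∑ k ∈ Finset.Ico k0 (L + 1), v k) y →
      ∃ w ∈ U, ‖y - w‖ ≤ 2 * M * ρ ^ L := by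
  set I := Finset.Ico k0 (L + 1) with hI
  have hσ : ∀ m : ℕ, ∑ κ ∈ Fintype.piFinset (fun _ : Fin m => I), α ^ (∑ i, κ i)
      ≤ (1 / 2) ^ m := by
    intro m
    have h1 := Finset.prod_univ_sum (fun _ : Fin m => I) (fun _ k => α ^ k)
    simp only [Finset.prod_const, Finset.card_univ, Fintype.card_fin, Finset.prod_pow_eq_pow_sum]
      at h1
    rw [← h1]
    exact pow_le_pow_left₀ (Finset.sum_nonneg fun k _ => by positivity) hsum m
  have hUex : ∀ q : (m : ℕ) × (Fin m → ℕ), ∃ U : Submodule ℂ Y,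
      q.2 ∈ kolWords k0 L q.1 → (KolDim U ((2 / α ^ 2) ^ L * α ^ (∑ i, q.2 i)) ∧
        ∀ v : Fin q.1 → X, (∀ i, v i ∈ V (q.2 i)) → p q.1 v ∈ U) := by
    rintro ⟨m, κ⟩
    by_cases hκ : κ ∈ kolWords k0 L m
    · have hκ' := Finset.mem_filter.1 hκ
      have hκI : ∀ i, κ i ∈ I := fun i => Fintype.mem_piFinset.1 hκ'.1 i
      obtain ⟨U, hU, hUp⟩ := multilinear_range (p m) (fun i => V (κ i)) (fun i => (2 / α) ^ κ i)
        (fun i => (hV _ (hκI i)).mono (by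
          have h1 := hα2 (κ i) (Finset.mem_Ico.1 (hκI i)).1
          rw [div_pow, le_div_iff₀ (by positivity), pow_succ]
          have : (0:ℝ) < 2 ^ κ i := by positivity
          nlinarith))
      refine ⟨U, fun _ => ⟨hU.mono ?_, hUp⟩⟩
      rw [Finset.prod_pow_eq_pow_sum]
      have h2 : (2 / α) = (2 / α ^ 2) * α := by field_simp
      rw [h2, mul_pow]
      have h3 : 1 ≤ 2 / α ^ 2 := by
        rw [le_div_iff₀ (by positivity)]; nlinarith
      gcongr
      exact hκ'.2
    · exact ⟨⊥, fun h => absurd h hκ⟩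
  choose Uw hUw using hUex
  let S : Finset ((m : ℕ) × (Fin m → ℕ)) := (Finset.range (L + 1)).sigma fun m => kolWords k0 L m
  refine ⟨S.sup Uw, ?_, ?_⟩
  · refine (KolDim.finset_sup S Uw _ fun q hq =>
      (hUw q (Finset.mem_sigma.1 hq).2).1).mono ?_
    rw [Finset.sum_sigma]
    have hpos : (0:ℝ) ≤ (2 / α ^ 2) ^ L := by positivity
    calc ∑ m ∈ Finset.range (L + 1), ∑ κ ∈ kolWords k0 L m, (2 / α ^ 2) ^ L * α ^ (∑ i, κ i)
        ≤ ∑ m ∈ Finset.range (L + 1), (2 / α ^ 2) ^ L * (1 / 2) ^ m := by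
          refine Finset.sum_le_sum fun m _ => ?_
          rw [← Finset.mul_sum]
          refine mul_le_mul_of_nonneg_left (le_trans ?_ (hσ m)) hpos
          exact Finset.sum_le_sum_of_subset_of_nonneg (Finset.filter_subset _ _)
            fun _ _ _ => by positivity
      _ = (2 / α ^ 2) ^ L * ∑ m ∈ Finset.range (L + 1), (1 / 2 : ℝ) ^ m := by
          rw [Finset.mul_sum]
      _ ≤ (2 / α ^ 2) ^ L * 2 := mul_le_mul_of_nonneg_left (sum_geometric_two_le _) hpos
      _ = _ := by ring
  · intro v hv y hy
    let z : ℕ → Y := fun m => ∑ κ ∈ kolWords k0 L m, p m fun i => v (κ i)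
    have hz0 : ∀ m ∉ Finset.range (L + 1), z m = 0 := by
      intro m hm
      have : kolWords k0 L m = ∅ := by
        rw [Finset.eq_empty_iff_forall_notMem]
        intro κ hκ
        have hκ' := Finset.mem_filter.1 hκ
        have h1 : ∀ i ∈ Finset.univ, 1 ≤ κ i := fun i _ =>
          hk0.trans (Finset.mem_Ico.1 (Fintype.mem_piFinset.1 hκ'.1 i)).1
        have h2 := Finset.card_nsmul_le_sum Finset.univ κ 1 h1
        have h3 : m ≤ ∑ i, κ i := by simpa using h2
        have h4 : ∑ i, κ i ≤ L := hκ'.2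
        simp only [Finset.mem_range] at hm
        omega
      simp [z, this]
    refine ⟨∑ m ∈ Finset.range (L + 1), z m, ?_, ?_⟩
    · refine Submodule.sum_mem _ fun m hm => Submodule.sum_mem _ fun κ hκ => ?_
      have hq : (⟨m, κ⟩ : (m : ℕ) × (Fin m → ℕ)) ∈ S := Finset.mem_sigma.2 ⟨hm, hκ⟩
      have hle : Uw ⟨m, κ⟩ ≤ S.sup Uw := Finset.le_sup hq
      refine hle ((hUw ⟨m, κ⟩ hκ).2 _ fun i => ?_)
      exact (hv _ (Fintype.mem_piFinset.1 (Finset.mem_filter.1 hκ).1 i)).1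
    · have hzs : HasSum z (∑ m ∈ Finset.range (L + 1), z m) := hasSum_sum_of_ne_finset_zero hz0
      have hg := hasSum_geometric_two.mul_left (M * ρ ^ L)
      have hfin : M * ρ ^ L * 2 = 2 * M * ρ ^ L := by ring
      rw [hfin] at hg
      refine (hy.sub hzs).norm_le_of_bounded hg fun m => ?_
      have hexp : (p m fun _ => ∑ k ∈ I, v k) =
          ∑ κ ∈ Fintype.piFinset (fun _ : Fin m => I), p m fun i => v (κ i) :=
        (p m).toMultilinearMap.map_sum_finset (fun _ k => v k) (fun _ => I)
      rw [hexp]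
      have hsplit := Finset.sum_filter_add_sum_filter_not
        (Fintype.piFinset fun _ : Fin m => I) (fun κ => ∑ i, κ i ≤ L)
        (fun κ => p m fun i => v (κ i))
      rw [← hsplit]
      have hzdef : z m = ∑ κ ∈ (Fintype.piFinset fun _ : Fin m => I).filter
        (fun κ => ∑ i, κ i ≤ L), p m fun i => v (κ i) := rfl
      rw [hzdef, add_sub_cancel_left]
      refine (norm_sum_le _ _).trans ?_
      have hterm : ∀ κ ∈ (Fintype.piFinset fun _ : Fin m => I).filter
          (fun κ => ¬ ∑ i, κ i ≤ L), ‖p m fun i => v (κ i)‖ ≤ M * ρ ^ L * α ^ (∑ i, κ i) := by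
        intro κ hκ
        have hκ' := Finset.mem_filter.1 hκ
        have hκI : ∀ i, κ i ∈ I := fun i => Fintype.mem_piFinset.1 hκ'.1 i
        calc ‖p m fun i => v (κ i)‖ ≤ ‖p m‖ * ∏ i, ‖v (κ i)‖ := (p m).le_opNorm _
          _ ≤ M * a ^ m * ∏ i, ‖v (κ i)‖ := by
              gcongr; exact hp m
          _ = M * ∏ i, (a * ‖v (κ i)‖) := by
              rw [Finset.prod_mul_distrib]; simp; ring
          _ ≤ M * ∏ i, (ρ * α) ^ κ i := by
              refine mul_le_mul_of_nonneg_left ?_ hM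
              exact Finset.prod_le_prod (fun i _ => by positivity) fun i _ => (hv _ (hκI i)).2
          _ = M * (ρ ^ (∑ i, κ i) * α ^ (∑ i, κ i)) := by
              rw [Finset.prod_pow_eq_pow_sum, mul_pow]
          _ ≤ M * (ρ ^ L * α ^ (∑ i, κ i)) := by
              refine mul_le_mul_of_nonneg_left ?_ hM
              refine mul_le_mul_of_nonneg_right ?_ (by positivity)
              exact pow_le_pow_of_le_one hρ.le hρ1 (not_le.1 hκ'.2).le
          _ = _ := by ring
      refine (Finset.sum_le_sum hterm).trans ?_
      rw [← Finset.mul_sum]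
      refine mul_le_mul_of_nonneg_left (le_trans ?_ (hσ m)) (by positivity)
      exact Finset.sum_le_sum_of_subset_of_nonneg (Finset.filter_subset _ _)
            fun _ _ _ => by positivity

end WordPart

section LocalPart

variable {X Y : Type*} [NormedAddCommGroup X] [NormedSpace ℂ X]
  [NormedAddCommGroup Y] [NormedSpace ℂ Y]

/-- Geometric approximation of `u` on `S` along the levels `L`. -/
def KolApprox (u : X → Y) (α ρ : ℝ) (S : Set X) : Prop :=
  ∃ A : ℝ, 0 < A ∧ ∃ k0 : ℕ, ∀ L, k0 ≤ L → ∃ U : Submodule ℂ Y,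
    KolDim U (A * (2 / α ^ 2) ^ L) ∧ ∀ x ∈ S, ∃ w ∈ U, ‖u x - w‖ ≤ A * ρ ^ L

lemma KolApprox.union {u : X → Y} {α ρ : ℝ} (hα : 0 < α) (hρ : 0 < ρ) {S T : Set X}
    (hS : KolApprox u α ρ S) (hT : KolApprox u α ρ T) : KolApprox u α ρ (S ∪ T) := by
  obtain ⟨A, hA, k, h⟩ := hS
  obtain ⟨A', hA', k', h'⟩ := hT
  refine ⟨A + A', by positivity, max k k', fun L hL => ?_⟩
  obtain ⟨U, hU, hx⟩ := h L ((le_max_left _ _).trans hL)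
  obtain ⟨U', hU', hx'⟩ := h' L ((le_max_right _ _).trans hL)
  refine ⟨U ⊔ U', (hU.sup hU').mono (by rw [add_mul]), ?_⟩
  have hpos : 0 ≤ ρ ^ L := by positivity
  rintro x (hxS | hxT)
  · obtain ⟨w, hw, hle⟩ := hx x hxS
    exact ⟨w, Submodule.mem_sup_left hw, hle.trans (by nlinarith)⟩
  · obtain ⟨w, hw, hle⟩ := hx' x hxT
    exact ⟨w, Submodule.mem_sup_right hw, hle.trans (by nlinarith)⟩

lemma kol_local [CompleteSpace Y] {O : Set X} (hO : IsOpen O) {u : X → Y}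
    (hu : DifferentiableOn ℂ u O) {B : ℝ} (hB : ∀ x ∈ O, ‖u x‖ ≤ B)
    {K : Set X} {C α β : ℝ} (hC : 0 < C) (hα : 0 < α) (hα1 : α < 1) (hβ : 0 < β)
    (hβα : β ≤ α ^ 2)
    (happ : ∀ k : ℕ, ∃ W : Submodule ℂ X, KolDim W (2 ^ k) ∧
      ∀ x ∈ K, ∃ w ∈ W, ‖x - w‖ ≤ C * β ^ k) {x₀ : X} (hx₀ : x₀ ∈ O) :
    ∃ δ > 0, KolApprox u α (β / α ^ 2) (K ∩ ball x₀ δ) := by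
  obtain ⟨R, hR, hRO⟩ := Metric.isOpen_iff.1 hO x₀ hx₀
  have hud := hu.mono hRO
  have hub : ∀ z ∈ ball x₀ R, ‖u z‖ ≤ B := fun z hz => hB z (hRO hz)
  have hB0 : 0 ≤ B := (norm_nonneg _).trans (hB x₀ hx₀)
  set M := B * Real.exp 1 with hM
  set a := 2 * Real.exp 1 / R with ha
  have hM0 : 0 ≤ M := by positivity
  have ha0 : 0 < a := by positivity
  set ρ := β / α ^ 2 with hρ
  have hρ0 : 0 < ρ := by positivity
  have hρ1 : ρ ≤ 1 := by rw [hρ, div_le_one (by positivity)]; exact hβα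
  have hβ1 : β < 1 := by nlinarith
  have hβρ : β ≤ ρ := by
    rw [hρ, le_div_iff₀ (by positivity)]
    have : α ^ 2 ≤ 1 := by nlinarith
    nlinarith
  set D := C * (2 + β⁻¹) with hD
  have hD0 : 0 < D := by positivity
  have hαlim := tendsto_pow_atTop_nhds_zero_of_lt_one hα.le hα1
  have hβlim := tendsto_pow_atTop_nhds_zero_of_lt_one hβ.le hβ1
  have e1 := hαlim.eventually (gt_mem_nhds (show 0 < (1 - α) / 2 by linarith))
  have e2 := hαlim.eventually (gt_mem_nhds (show 0 < 1 / (a * D) by positivity))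
  have e3 := hβlim.eventually (gt_mem_nhds (show 0 < R / (4 * C) by positivity))
  obtain ⟨k0, ⟨⟨h1, h2⟩, h3⟩, hk0⟩ :=
    (((e1.and e2).and e3).and (eventually_ge_atTop 1)).exists
  have hβk : C * β ^ k0 < R / 4 := by
    rw [lt_div_iff₀ (by positivity)] at h3; linarith
  choose W hW hWx using happ
  refine ⟨C * β ^ k0, by positivity, 2 + 2 * M + 4 * B / R * C, by positivity, k0, fun L hL => ?_⟩
  let p : (m : ℕ) → ContinuousMultilinearMap ℂ (fun _ : Fin m => X) Y := fun m =>
    ((m.factorial : ℂ)⁻¹) • iteratedFDeriv ℂ m u x₀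
  have hp : ∀ m, ‖p m‖ ≤ M * a ^ m := fun m => holo_iterated_bound hR hud hub m
  let V : ℕ → Submodule ℂ X := fun k => W k ⊔ W (k - 1) ⊔ Submodule.span ℂ {x₀}
  have hV : ∀ k ∈ Finset.Ico k0 (L + 1), KolDim (V k) (2 ^ (k + 1)) := by
    intro k hk
    have hk1 : 1 ≤ k := hk0.trans (Finset.mem_Ico.1 hk).1
    have hs : KolDim (Submodule.span ℂ {x₀}) 1 := by
      refine ⟨inferInstance, ?_⟩
      have := finrank_span_le_card (R := ℂ) ({x₀} : Set X)
      simp only [toFinset_singleton, Finset.card_singleton] at this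
      exact_mod_cast this
    refine (((hW k).sup (hW (k - 1))).sup hs).mono ?_
    obtain ⟨j, rfl⟩ : ∃ j, k = j + 1 := ⟨k - 1, by omega⟩
    have : (1:ℝ) ≤ 2 ^ j := one_le_pow₀ (by norm_num)
    simp only [add_tsub_cancel_right, pow_succ]
    linarith
  have hanti : ∀ k, k0 ≤ k → α ^ k ≤ α ^ k0 := fun k hk =>
    pow_le_pow_of_le_one hα.le hα1.le hk
  obtain ⟨U, hU, hUx⟩ := kol_core p hM0 ha0.le hp hα hα1 hρ0 hρ1 hk0 (L := L)
    (by
      refine (geom_sum_Ico_le_of_lt_one hα.le hα1).trans ?_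
      rw [div_le_iff₀ (by linarith)]; linarith)
    (fun k hk => by have := hanti k hk; linarith) V hV
  refine ⟨U, hU.mono ?_, ?_⟩
  · have : 0 ≤ 4 * B / R * C := by positivity
    gcongr
    linarith
  rintro x ⟨hxK, hxb⟩
  choose w hwW hwx using fun k => hWx k x hxK
  have hxx : ‖x - x₀‖ < C * β ^ k0 := by rwa [← dist_eq_norm]
  let g : ℕ → X := fun k => if k ≤ k0 then x₀ else w (k - 1)
  have hsumv : ∑ k ∈ Finset.Ico k0 (L + 1), (g (k + 1) - g k) = w L - x₀ := by
    rw [Finset.sum_Ico_sub g (by omega)]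
    have h1 : g (L + 1) = w L := by simp only [g]; rw [if_neg (by omega)]; simp
    have h2 : g k0 = x₀ := by simp [g]
    rw [h1, h2]
  have hwL : ‖x - w L‖ < R / 4 := by
    refine lt_of_le_of_lt (hwx L) (lt_of_le_of_lt ?_ hβk)
    exact mul_le_mul_of_nonneg_left (pow_le_pow_of_le_one hβ.le hβ1.le hL) hC.le
  have hh : ‖w L - x₀‖ < R := by
    have : w L - x₀ = (x - x₀) - (x - w L) := by abel
    rw [this]
    have := norm_sub_le (x - x₀) (x - w L)
    linarith
  have hsum := holo_hasSum hud hh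
  rw [add_sub_cancel] at hsum
  obtain ⟨z, hzU, hz⟩ := hUx (fun k => g (k + 1) - g k) (by
    intro k hk
    have hk' := (Finset.mem_Ico.1 hk).1
    have hg1 : g (k + 1) = w k := by simp only [g]; rw [if_neg (by omega)]; simp
    have hbnd : ∀ n : X, ‖n‖ ≤ D * β ^ k → a * ‖n‖ ≤ (ρ * α) ^ k := by
      intro n hn
      have h4 := hanti k hk'
      rw [lt_div_iff₀ (by positivity)] at h2
      have h5 : a * D * α ^ k ≤ 1 := by
        have := mul_le_mul_of_nonneg_left h4 (show 0 ≤ a * D by positivity)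
        linarith
      have h6 : ρ * α = β / α := by rw [hρ]; field_simp
      rw [h6, div_pow, le_div_iff₀ (by positivity)]
      calc a * ‖n‖ * α ^ k ≤ a * (D * β ^ k) * α ^ k := by gcongr
        _ = (a * D * α ^ k) * β ^ k := by ring
        _ ≤ 1 * β ^ k := by gcongr
        _ = β ^ k := one_mul _
    have hwk := hwx k
    have hβk0 : 0 < β ^ k := by positivity
    rcases hk'.eq_or_lt with rfl | hlt
    · have hg2 : g k0 = x₀ := by simp [g]
      simp only [hg1, hg2]
      refine ⟨?_, hbnd _ ?_⟩
      · exact Submodule.sub_mem _ (Submodule.mem_sup_left (Submodule.mem_sup_left (hwW k0)))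
          (Submodule.mem_sup_right (Submodule.mem_span_singleton_self x₀))
      · have h7 : w k0 - x₀ = (x - x₀) - (x - w k0) := by abel
        rw [h7]
        have h8 := norm_sub_le (x - x₀) (x - w k0)
        have h9 : 0 < C * β⁻¹ * β ^ k0 := by positivity
        have h10 : D * β ^ k0 = 2 * (C * β ^ k0) + C * β⁻¹ * β ^ k0 := by rw [hD]; ring
        linarith
    · have hg2 : g k = w (k - 1) := by simp only [g]; rw [if_neg (by omega)]
      simp only [hg1, hg2]
      refine ⟨?_, hbnd _ ?_⟩
      · exact Submodule.sub_mem _ (Submodule.mem_sup_left (Submodule.mem_sup_left (hwW k)))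
          (Submodule.mem_sup_left (Submodule.mem_sup_right (hwW (k - 1))))
      · have h7 : w k - w (k - 1) = (x - w (k - 1)) - (x - w k) := by abel
        rw [h7]
        have h8 := norm_sub_le (x - w (k - 1)) (x - w k)
        have h9 := hwx (k - 1)
        have h11 : β ^ (k - 1) = β⁻¹ * β ^ k := by
          obtain ⟨j, rfl⟩ : ∃ j, k = j + 1 := ⟨k - 1, by omega⟩
          rw [add_tsub_cancel_right, pow_succ]; field_simp
        rw [h11] at h9
        have h10 : D * β ^ k = 2 * (C * β ^ k) + C * (β⁻¹ * β ^ k) := by rw [hD]; ring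
        have : 0 < C * β ^ k := by positivity
        linarith)
    (u (w L)) (by simp only [hsumv]; exact hsum)
  refine ⟨z, hzU, ?_⟩
  -- Lipschitz step
  have hxR : x ∈ ball x₀ (R / 2) := by rw [mem_ball, dist_eq_norm]; linarith
  have hbx : ball x (R / 2) ⊆ ball x₀ R := kol_sub_ball hxR (by linarith)
  have hmem : w L ∈ ball x (R / 2) := by rw [mem_ball, dist_eq_norm, norm_sub_rev]; linarith
  have hlip := Complex.dist_le_div_mul_dist_of_mapsTo_ball (R₂ := 2 * B) (hud.mono hbx) (by
    intro y hy
    rw [mem_closedBall, dist_eq_norm]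
    have h1 := hub y (hbx hy)
    have h2 := hub x (hbx (mem_ball_self (by positivity)))
    have h3 := norm_sub_le (u y) (u x)
    linarith) hmem
  rw [dist_eq_norm, dist_eq_norm, norm_sub_rev, norm_sub_rev (w L)] at hlip
  have hl2 : ‖u x - u (w L)‖ ≤ 4 * B / R * C * ρ ^ L := by
    refine hlip.trans ?_
    calc 2 * B / (R / 2) * ‖x - w L‖ ≤ 2 * B / (R / 2) * (C * ρ ^ L) := by
          refine mul_le_mul_of_nonneg_left ((hwx L).trans ?_) (by positivity)
          gcongr
      _ = _ := by field_simp; ring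
  have : u x - z = (u x - u (w L)) + (u (w L) - z) := by abel
  rw [this]
  refine (norm_add_le _ _).trans ?_
  have : 0 < ρ ^ L := by positivity
  nlinarith

lemma kol_compact [CompleteSpace Y] {O : Set X} (hO : IsOpen O) {u : X → Y}
    (hu : DifferentiableOn ℂ u O) {B : ℝ} (hB : ∀ x ∈ O, ‖u x‖ ≤ B)
    {K : Set X} (hK : IsCompact K) (hKO : K ⊆ O) {C α β : ℝ} (hC : 0 < C) (hα : 0 < α)
    (hα1 : α < 1) (hβ : 0 < β) (hβα : β ≤ α ^ 2)
    (happ : ∀ k : ℕ, ∃ W : Submodule ℂ X, KolDim W (2 ^ k) ∧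
      ∀ x ∈ K, ∃ w ∈ W, ‖x - w‖ ≤ C * β ^ k) :
    KolApprox u α (β / α ^ 2) K := by
  have hρ : 0 < β / α ^ 2 := by positivity
  refine hK.induction_on (p := KolApprox u α (β / α ^ 2)) ?_ ?_ ?_ ?_
  · exact ⟨1, one_pos, 0, fun L _ => ⟨⊥, KolDim.bot.mono (by positivity), by simp⟩⟩
  · rintro S T hST ⟨A, hA, k0, h⟩
    refine ⟨A, hA, k0, fun L hL => ?_⟩
    obtain ⟨U, hU, hx⟩ := h L hL
    exact ⟨U, hU, fun x hxS => hx x (hST hxS)⟩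
  · exact fun S T hS hT => hS.union hα hρ hT
  · intro x hx
    obtain ⟨δ, hδ, h⟩ := kol_local hO hu hB hC hα hα1 hβ hβα happ (hKO hx)
    exact ⟨_, inter_mem self_mem_nhdsWithin (mem_nhdsWithin_of_mem_nhds (ball_mem_nhds x hδ)), h⟩

end LocalPart

section WidthPart

variable {X Y : Type*} [NormedAddCommGroup X] [NormedSpace ℂ X]
  [NormedAddCommGroup Y] [NormedSpace ℂ Y]

lemma kol_enlarge (n m : ℕ) : ∀ U : Submodule ℂ X, FiniteDimensional ℂ U →
    m + Module.finrank ℂ U = n →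
    (∃ U' : Submodule ℂ X, U ≤ U' ∧ FiniteDimensional ℂ U' ∧ Module.finrank ℂ U' = n) ∨
      KolDim (⊤ : Submodule ℂ X) n := by
  induction m with
  | zero => exact fun U hU h => Or.inl ⟨U, le_rfl, hU, by omega⟩
  | succ m ih =>
    intro U hU h
    by_cases htop : U = ⊤
    · subst htop
      exact Or.inr ⟨hU, by exact_mod_cast (by omega)⟩
    · obtain ⟨v, -, hv⟩ := SetLike.exists_of_lt (lt_top_iff_ne_top.mpr htop)
      have hfd : FiniteDimensional ℂ ↥(U ⊔ Submodule.span ℂ {v}) := inferInstance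
      have hdis : U ⊓ Submodule.span ℂ {v} = ⊥ := by
        rw [Submodule.eq_bot_iff]
        rintro x ⟨hx1, hx2⟩
        obtain ⟨c, rfl⟩ := Submodule.mem_span_singleton.mp hx2
        by_cases hc : c = 0
        · simp [hc]
        · exact absurd ((Submodule.smul_mem_iff _ hc).mp hx1) hv
      have hv0 : v ≠ 0 := by
        rintro rfl
        exact hv U.zero_mem
      have h1 := Submodule.finrank_sup_add_finrank_inf_eq U (Submodule.span ℂ {v})
      rw [hdis, finrank_bot, finrank_span_singleton hv0] at h1
      rcases ih (U ⊔ Submodule.span ℂ {v}) hfd (by omega) with ⟨U', h', h2⟩ | h'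
      · exact Or.inl ⟨U', le_sup_left.trans h', h2⟩
      · exact Or.inr h'

lemma kolWidth_nonneg (n : ℕ) (K : Set X) : 0 ≤ kolWidth n K :=
  Real.iInf_nonneg fun _ => Real.iSup_nonneg fun _ => Real.iInf_nonneg fun _ => norm_nonneg _

lemma kolWidth_le {n : ℕ} {U : Submodule ℂ X} (hU : KolDim U n) {S : Set X}
    {ε : ℝ} (hε : 0 ≤ ε) (h : ∀ x ∈ S, ∃ w ∈ U, ‖x - w‖ ≤ ε) : kolWidth n S ≤ ε := by
  have key : ∀ V : Submodule ℂ X, U ≤ V → Module.finrank ℂ V = n → kolWidth n S ≤ ε := by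
    intro V hUV hV
    refine (ciInf_le ⟨0, ?_⟩ (⟨V, hV⟩ : {W : Submodule ℂ X // Module.finrank ℂ ↥W = n})).trans ?_
    · rintro _ ⟨W, rfl⟩
      exact Real.iSup_nonneg fun _ => Real.iInf_nonneg fun _ => norm_nonneg _
    · refine Real.iSup_le (fun x => ?_) hε
      obtain ⟨w, hw, hwx⟩ := h x x.2
      refine (ciInf_le ⟨0, ?_⟩ (⟨w, hUV hw⟩ : V)).trans hwx
      rintro _ ⟨W, rfl⟩
      exact norm_nonneg _
  have hd : Module.finrank ℂ U ≤ n := by exact_mod_cast hU.2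
  rcases kol_enlarge n (n - Module.finrank ℂ U) U hU.1 (by omega) with ⟨V, h1, -, h2⟩ | ⟨ht, hn⟩
  · exact key V h1 h2
  · by_cases hne : Nonempty {W : Submodule ℂ X // Module.finrank ℂ ↥W = n}
    · obtain ⟨V, hV⟩ := hne
      have hn' : Module.finrank ℂ (⊤ : Submodule ℂ X) ≤ n := by exact_mod_cast hn
      have hVt : V = ⊤ := Submodule.eq_of_le_of_finrank_le le_top (by omega)
      exact key V (hVt ▸ le_top) hV
    · rw [not_nonempty_iff] at hne
      unfold kolWidth
      rw [Real.iInf_of_isEmpty]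
      exact hε

lemma kol_of_width {K : Set X} (hK : IsCompact K) {n : ℕ} (hn : 1 ≤ n) {ε δ : ℝ} (hε : 0 < ε)
    (hδ : kolWidth n K ≤ δ) (hδ0 : 0 ≤ δ) : ∃ W : Submodule ℂ X, KolDim W n ∧
      ∀ x ∈ K, ∃ w ∈ W, ‖x - w‖ ≤ δ + 2 * ε := by
  by_cases hne : Nonempty {W : Submodule ℂ X // Module.finrank ℂ ↥W = n}
  · have h1 : kolWidth n K < δ + ε := by linarith
    obtain ⟨⟨W, hW⟩, h2⟩ := exists_lt_of_ciInf_lt h1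
    refine ⟨W, ⟨FiniteDimensional.of_finrank_pos (by omega), by rw [hW]⟩, fun x hx => ?_⟩
    obtain ⟨R, hR⟩ := hK.isBounded.exists_norm_le
    have hb : BddAbove (range fun x : K => ⨅ w : W, ‖(x : X) - (w : X)‖) := by
      refine ⟨R, ?_⟩
      rintro _ ⟨y, rfl⟩
      refine (ciInf_le ⟨0, ?_⟩ (0 : W)).trans ?_
      · rintro _ ⟨w, rfl⟩
        exact norm_nonneg _
      · simpa using hR y y.2
    have h3 : (⨅ w : W, ‖x - (w : X)‖) < δ + 2 * ε := by
      have := le_ciSup hb (⟨x, hx⟩ : K)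
      simp only at this h2
      linarith
    obtain ⟨w, hw⟩ := exists_lt_of_ciInf_lt h3
    exact ⟨w, w.2, hw.le⟩
  · rcases kol_enlarge (X := X) n n ⊥ inferInstance (by simp) with ⟨V, -, -, h2⟩ | ht
    · exact absurd ⟨⟨V, h2⟩⟩ hne
    · exact ⟨⊤, ht, fun x _ => ⟨x, trivial, by simp; positivity⟩⟩

lemma kol_happ {K : Set X} (hK : IsCompact K) {s : ℝ} {C : ℝ}
    (h : ∀ n : ℕ, 1 ≤ n → (n : ℝ) ^ s * kolWidth n K ≤ C) (k : ℕ) :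
    ∃ W : Submodule ℂ X, KolDim W (2 ^ k) ∧
      ∀ x ∈ K, ∃ w ∈ W, ‖x - w‖ ≤ (|C| + 2) * ((2 : ℝ) ^ (-s)) ^ k := by
  have hn : 1 ≤ 2 ^ k := Nat.one_le_two_pow
  have hp : 0 < ((2 : ℝ) ^ (-s)) ^ k := by positivity
  have he : (((2 ^ k : ℕ) : ℝ)) ^ s * ((2 : ℝ) ^ (-s)) ^ k = 1 := by
    push_cast
    rw [← Real.rpow_natCast, ← Real.rpow_natCast, ← Real.rpow_mul (by norm_num),
      ← Real.rpow_mul (by norm_num), ← Real.rpow_add (by norm_num)]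
    ring_nf
    simp
  have hw : kolWidth (2 ^ k) K ≤ |C| * ((2 : ℝ) ^ (-s)) ^ k := by
    have h1 := mul_le_mul_of_nonneg_right ((h _ hn).trans (le_abs_self C)) hp.le
    calc kolWidth (2 ^ k) K = ((((2 ^ k : ℕ) : ℝ)) ^ s * ((2 : ℝ) ^ (-s)) ^ k) *
          kolWidth (2 ^ k) K := by rw [he, one_mul]
      _ = (((2 ^ k : ℕ) : ℝ)) ^ s * kolWidth (2 ^ k) K * ((2 : ℝ) ^ (-s)) ^ k := by ring
      _ ≤ _ := h1
  obtain ⟨W, hW, hx⟩ := kol_of_width hK hn hp hw (by positivity)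
  refine ⟨W, by simpa using hW, fun x hxK => ?_⟩
  obtain ⟨w, hw1, hw2⟩ := hx x hxK
  exact ⟨w, hw1, hw2.trans (le_of_eq (by ring))⟩

lemma kol_final [CompleteSpace Y] {O : Set X} (hO : IsOpen O) {u : X → Y}
    (hu : DifferentiableOn ℂ u O) {B : ℝ} (hB : ∀ x ∈ O, ‖u x‖ ≤ B)
    {K : Set X} (hK : IsCompact K) (hKO : K ⊆ O) {s t : ℝ} (ht : 0 ≤ t) (hts : t < s) {C : ℝ}
    (h : ∀ n : ℕ, 1 ≤ n → (n : ℝ) ^ s * kolWidth n K ≤ C) :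
    ∃ C : ℝ, ∀ n : ℕ, 1 ≤ n → (n : ℝ) ^ t * kolWidth n (u '' K) ≤ C := by
  obtain ⟨α, hαdef⟩ : ∃ α : ℝ, α = (2 : ℝ) ^ (-((s - t) / (2 * t + 2))) := ⟨_, rfl⟩
  obtain ⟨β, hβdef⟩ : ∃ β : ℝ, β = (2 : ℝ) ^ (-s) := ⟨_, rfl⟩
  have hα : 0 < α := by rw [hαdef]; positivity
  have hβ : 0 < β := by rw [hβdef]; positivity
  have hq : 0 < (s - t) / (2 * t + 2) := div_pos (by linarith) (by linarith)
  have hα1 : α < 1 := by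
    rw [hαdef]
    exact Real.rpow_lt_one_of_one_lt_of_neg (by norm_num) (by linarith)
  have hα2 : α ^ 2 = (2 : ℝ) ^ (-((s - t) / (t + 1))) := by
    rw [hαdef, ← Real.rpow_natCast, ← Real.rpow_mul (by norm_num)]
    congr 1
    have : t + 1 ≠ 0 := by linarith
    have : 2 * t + 2 ≠ 0 := by linarith
    push_cast
    field_simp
  have hβα : β ≤ α ^ 2 := by
    rw [hα2, hβdef]
    refine Real.rpow_le_rpow_of_exponent_le (by norm_num) (neg_le_neg ?_)
    rw [div_le_iff₀ (by linarith)]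
    nlinarith
  obtain ⟨A, hA, k0, hL⟩ := kol_compact hO hu hB hK hKO (C := |C| + 2) (by positivity) hα hα1 hβ
    hβα (fun k => by rw [hβdef]; exact kol_happ hK h k)
  obtain ⟨b, hbdef⟩ : ∃ b : ℝ, b = 2 / α ^ 2 := ⟨_, rfl⟩
  obtain ⟨ρ, hρdef⟩ : ∃ ρ : ℝ, ρ = β / α ^ 2 := ⟨_, rfl⟩
  rw [← hbdef, ← hρdef] at hL
  have hρ : 0 < ρ := by rw [hρdef]; positivity
  have hb1 : 1 < b := by
    rw [hbdef, lt_div_iff₀ (by positivity)]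
    nlinarith
  have hb0 : 0 < b := by linarith
  have hkey : b ^ t * ρ = 1 := by
    rw [hbdef, hρdef, hα2, hβdef]
    nth_rewrite 1 [← Real.rpow_one 2]
    rw [← Real.rpow_sub (by norm_num), ← Real.rpow_sub (by norm_num),
      ← Real.rpow_mul (by norm_num), ← Real.rpow_add (by norm_num)]
    rw [← Real.rpow_zero 2]
    congr 1
    have : t + 1 ≠ 0 := by linarith
    field_simp
    ring
  obtain ⟨N, hNdef⟩ : ∃ N : ℝ, N = A * b ^ k0 := ⟨_, rfl⟩
  have hN : 0 < N := by rw [hNdef]; positivity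
  have hAb : 0 < A ^ (t + 1) * b ^ t := by positivity
  have hNB : 0 ≤ N ^ t * max B 0 := by positivity
  refine ⟨A ^ (t + 1) * b ^ t + N ^ t * max B 0, fun n hn => ?_⟩
  have hn0 : (0 : ℝ) ≤ n := by positivity
  by_cases hnN : N ≤ n
  · have hx : b ^ k0 ≤ n / A := by
      rw [le_div_iff₀ hA, mul_comm, ← hNdef]
      exact hnN
    obtain ⟨L, hL1, hL2⟩ := exists_nat_pow_near ((one_le_pow₀ hb1.le).trans hx) hb1
    have hkL : k0 ≤ L := by
      have := (pow_lt_pow_iff_right₀ hb1).mp (hx.trans_lt hL2)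
      omega
    obtain ⟨U, hU, hUx⟩ := hL L hkL
    rw [le_div_iff₀ hA] at hL1
    rw [div_lt_iff₀ hA] at hL2
    have hw : kolWidth n (u '' K) ≤ A * ρ ^ L := by
      refine kolWidth_le (hU.mono (by linarith)) (by positivity) ?_
      rintro _ ⟨x, hx, rfl⟩
      exact hUx x hx
    have h1 : (n : ℝ) ^ t ≤ (b ^ (L + 1) * A) ^ t := Real.rpow_le_rpow hn0 hL2.le ht
    have h2 : (b ^ (L + 1) * A) ^ t = A ^ t * b ^ t * (b ^ t) ^ L := by
      rw [Real.mul_rpow (by positivity) hA.le, pow_succ, Real.mul_rpow (by positivity) hb0.le,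
        Real.rpow_pow_comm hb0.le]
      ring
    have h3 : (b ^ t) ^ L * ρ ^ L = 1 := by rw [← mul_pow, hkey, one_pow]
    calc (n : ℝ) ^ t * kolWidth n (u '' K) ≤ (b ^ (L + 1) * A) ^ t * (A * ρ ^ L) :=
          mul_le_mul h1 hw (kolWidth_nonneg _ _) (by positivity)
      _ = A ^ t * A * b ^ t * ((b ^ t) ^ L * ρ ^ L) := by rw [h2]; ring
      _ = A ^ (t + 1) * b ^ t := by rw [h3, Real.rpow_add hA, Real.rpow_one]; ring
      _ ≤ _ := by linarith
  · have hw : kolWidth n (u '' K) ≤ max B 0 := by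
      refine kolWidth_le (U := ⊥) (KolDim.bot.mono (by positivity)) (le_max_right _ _) ?_
      rintro _ ⟨x, hx, rfl⟩
      exact ⟨0, by simp, by simpa using Or.inl (hB x (hKO hx))⟩
    have h1 : (n : ℝ) ^ t ≤ N ^ t := Real.rpow_le_rpow hn0 (not_le.mp hnN).le ht
    have := mul_le_mul h1 hw (kolWidth_nonneg _ _) (by positivity)
    linarith

end WidthPart

end KolmogorovHelpers

/-- **Kolmogorov widths under holomorphic mappings** (Cohen-DeVore, Theorem 1.1).
Let `X, Y` be complex Banach spaces, `O ⊆ X` open, and let `u` be holomorphic on `O`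
(i.e. complex Fréchet differentiable at each point of `O`) and uniformly bounded on `O`
by `B`.  If `K ⊆ O` is compact, then for every `s > 1` and `t < s - 1`:
if `sup_{n ≥ 1} n^s d_n(K)_X < ∞`, then `sup_{n ≥ 1} n^t d_n(u(K))_Y < ∞`. -/
theorem kolWidth_holomorphic_image
    {X Y : Type*} [NormedAddCommGroup X] [NormedSpace ℂ X] [CompleteSpace X]
    [NormedAddCommGroup Y] [NormedSpace ℂ Y] [CompleteSpace Y]
    (O : Set X) (hO : IsOpen O) (u : X → Y) (hu : DifferentiableOn ℂ u O)
    (B : ℝ) (hB : ∀ x ∈ O, ‖u x‖ ≤ B)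
    (K : Set X) (hK : IsCompact K) (hKO : K ⊆ O)
    (s t : ℝ) (hs : 1 < s) (hts : t < s - 1)
    (hwidth : ∃ C : ℝ, ∀ n : ℕ, 1 ≤ n → (n : ℝ) ^ s * kolWidth n K ≤ C) :
    ∃ C : ℝ, ∀ n : ℕ, 1 ≤ n → (n : ℝ) ^ t * kolWidth n (u '' K) ≤ C := by
  obtain ⟨C, hC⟩ := hwidth
  obtain ⟨C', hC'⟩ := kol_final hO hu hB hK hKO (t := max t 0) (le_max_right _ _)
    (max_lt (by linarith) (by linarith)) hC
  refine ⟨C', fun n hn => le_trans ?_ (hC' n hn)⟩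
  exact mul_le_mul_of_nonneg_right
    (Real.rpow_le_rpow_of_exponent_le (by exact_mod_cast hn) (le_max_left _ _))
    (kolWidth_nonneg _ _)
end

section
/- Let X, Y, Z be complex Banach spaces, let P : Y × X → Z be holomorphic on all of Y × X, and let K ⊆ X be compact. Assume: (ii) for each a ∈ K there exists a unique u(a) ∈ Y with P(u(a), a) = 0; and (iii) for each a ∈ K the partial Fréchet derivative ∂_u P(u(a), a) is an isomorphism (a bounded linear bijection with bounded inverse) from Y onto Z. Then there exist an open set O ⊆ X containing K, a finite constant B, and a map g : O → Y which is holomorphic on O, satisfies g(a) = u(a) for all a ∈ K, satisfies P(g(b), b) = 0 for all b ∈ O, and is uniformly bounded: sup_{b∈O} ‖g(b)‖_Y ≤ B. -/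
open Filter Topology Metric in
theorem cauchy_fderiv_bound {E F : Type*} [NormedAddCommGroup E] [NormedSpace ℂ E]
    [NormedAddCommGroup F] [NormedSpace ℂ F] {f : E → F} (hf : Differentiable ℂ f)
    {x : E} {r M : ℝ} (hr : 0 < r) (hM : ∀ z ∈ closedBall x r, ‖f z‖ ≤ M) :
    ‖fderiv ℂ f x‖ ≤ M / r := by
  have hM0 : 0 ≤ M := (norm_nonneg _).trans (hM x (mem_closedBall_self hr.le))
  refine ContinuousLinearMap.opNorm_le_bound _ (by positivity) fun v => ?_
  rcases eq_or_ne v 0 with rfl | hv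
  · simp
  have hv' : 0 < ‖v‖ := norm_pos_iff.2 hv
  have hl : ∀ t : ℂ, HasDerivAt (fun t : ℂ => x + t • v) v t := fun t => by
    simpa using ((hasDerivAt_id t).smul_const v).const_add x
  have hd : HasDerivAt (fun t : ℂ => f (x + t • v)) (fderiv ℂ f x v) 0 := by
    have h1 : HasFDerivAt f (fderiv ℂ f x) (x + (0 : ℂ) • v) := by
      simpa using (hf x).hasFDerivAt
    exact h1.comp_hasDerivAt (0 : ℂ) (hl 0)
  have hdiff : Differentiable ℂ (fun t : ℂ => f (x + t • v)) :=
    hf.comp fun t => (hl t).differentiableAt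
  have := Complex.norm_deriv_le_of_forall_mem_sphere_norm_le (c := 0) (R := r / ‖v‖) (C := M)
    (by positivity) hdiff.diffContOnCl (fun t ht => hM _ (by
      have : ‖t‖ = r / ‖v‖ := by simpa using ht
      simp [norm_smul, this, hv'.ne']))
  rw [hd.deriv] at this
  calc _ ≤ _ := this
    _ = _ := by field_simp

open Filter Topology Metric in
theorem contDiff_one_of_holomorphic {E F : Type*} [NormedAddCommGroup E] [NormedSpace ℂ E]
    [NormedAddCommGroup F] [NormedSpace ℂ F] {f : E → F} (hf : Differentiable ℂ f) :
    ContDiff ℂ 1 f := by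
  refine contDiff_one_iff_fderiv.2 ⟨hf, continuous_iff_continuousAt.2 fun x => ?_⟩
  -- local bound
  obtain ⟨r, hr, M, hM0, hM⟩ : ∃ r > 0, ∃ M ≥ 0, ∀ z ∈ ball x (4 * r), ‖f z‖ ≤ M := by
    have h : ∀ᶠ z in 𝓝 x, ‖f z‖ < ‖f x‖ + 1 :=
      (hf.continuous.norm.tendsto x).eventually_lt_const (lt_add_one _)
    obtain ⟨ε, hε, h⟩ := Metric.eventually_nhds_iff_ball.1 h
    exact ⟨ε / 4, by positivity, ‖f x‖ + 1, by positivity, fun z hz => (h z (by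
      simpa [mul_div_cancel₀] using hz)).le⟩
  have hb : ∀ z ∈ ball x (3 * r), ‖fderiv ℂ f z‖ ≤ M / (r / 2) := fun z hz => by
    refine cauchy_fderiv_bound hf (by positivity) fun w hw => hM w ?_
    rw [mem_ball] at hz ⊢
    rw [mem_closedBall] at hw
    linarith [dist_triangle w z x]
  have hlip : ∀ z ∈ ball x (3 * r), ∀ w ∈ ball x (3 * r), ‖f w - f z‖ ≤ M / (r / 2) * ‖w - z‖ :=
    fun z hz w hw => by
      let _ : NormedSpace ℝ E := NormedSpace.restrictScalars ℝ ℂ E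
      exact Convex.norm_image_sub_le_of_norm_fderiv_le (𝕜 := ℂ) (fun y _ => hf y) hb
        (convex_ball x (3 * r)) hz hw
  have hfd : ∀ y ∈ ball x r, ‖fderiv ℂ f y - fderiv ℂ f x‖ ≤ M / (r / 2) / r * ‖y - x‖ := by
    intro y hy
    have hg : Differentiable ℂ (fun z => f (z + (y - x)) - f z) :=
      (hf.comp (differentiable_id.add_const _)).sub hf
    have h1 : fderiv ℂ (fun z => f (z + (y - x)) - f z) x = fderiv ℂ f y - fderiv ℂ f x := by
      have h2 : DifferentiableAt ℂ (fun z => f (z + (y - x))) x :=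
        hf.comp (differentiable_id.add_const _) x
      rw [fderiv_fun_sub h2 (hf x), fderiv_comp_add_right]
      simp
    rw [← h1]
    refine (cauchy_fderiv_bound hg hr (M := M / (r / 2) * ‖y - x‖) fun z hz => ?_).trans_eq
      (by ring)
    have hy' : ‖y - x‖ < r := by simpa [dist_eq_norm] using hy
    have hz' : ‖z - x‖ ≤ r := by simpa [dist_eq_norm] using hz
    refine (hlip z ?_ (z + (y - x)) ?_).trans_eq (by simp)
    · rw [mem_ball, dist_eq_norm]; linarith
    · rw [mem_ball, dist_eq_norm]
      have : z + (y - x) - x = (z - x) + (y - x) := by abel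
      rw [this]
      linarith [norm_add_le (z - x) (y - x)]
  rw [ContinuousAt, tendsto_iff_norm_sub_tendsto_zero]
  refine squeeze_zero' (Eventually.of_forall fun _ => norm_nonneg _)
    ((ball_mem_nhds x hr : ball x r ∈ 𝓝 x) |> fun h => mem_of_superset h hfd) ?_
  have : Continuous fun y => M / (r / 2) / r * ‖y - x‖ := by fun_prop
  simpa using this.tendsto x

/-- **Cohen-DeVore, Theorem 4.1** (holomorphic implicit function theorem on compact sets).
Let `X, Y, Z` be complex Banach spaces, `P : Y × X → Z` holomorphic on all of `Y × X`, and
`K ⊆ X` compact.  Assume: (ii) for each `a ∈ K` there is a unique solution `u a ∈ Y` of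
`P(u a, a) = 0`; (iii) for each `a ∈ K` the partial Fréchet derivative `∂_u P(u a, a)` is an
isomorphism from `Y` onto `Z`.  Then there exist an open set `O ⊇ K`, a bound `B`, and a map
`g : O → Y`, holomorphic on `O`, agreeing with `u` on `K`, solving `P(g b, b) = 0` on `O`,
and uniformly bounded by `B` on `O`. -/
theorem holomorphic_solution_map_extension
    {X Y Z : Type*} [NormedAddCommGroup X] [NormedSpace ℂ X] [CompleteSpace X]
    [NormedAddCommGroup Y] [NormedSpace ℂ Y] [CompleteSpace Y]
    [NormedAddCommGroup Z] [NormedSpace ℂ Z] [CompleteSpace Z]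
    (P : Y × X → Z) (hP : Differentiable ℂ P)
    (K : Set X) (hK : IsCompact K)
    (u : X → Y)
    (hsol : ∀ a ∈ K, P (u a, a) = 0)
    (huniq : ∀ a ∈ K, ∀ v : Y, P (v, a) = 0 → v = u a)
    (hiso : ∀ a ∈ K, ∃ e : Y ≃L[ℂ] Z,
      HasFDerivAt (fun v : Y => P (v, a)) (e : Y →L[ℂ] Z) (u a)) :
    ∃ (O : Set X) (B : ℝ) (g : X → Y), IsOpen O ∧ K ⊆ O ∧
      DifferentiableOn ℂ g O ∧ (∀ a ∈ K, g a = u a) ∧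
      (∀ b ∈ O, P (g b, b) = 0) ∧ (∀ b ∈ O, ‖g b‖ ≤ B) := by
  classical
  -- swap the variables
  set f : X × Y → Z := fun q => P (q.2, q.1) with hfdef
  have hf : Differentiable ℂ f := hP.comp (differentiable_snd.prodMk differentiable_fst)
  have hC : ContDiff ℂ 1 f := contDiff_one_of_holomorphic hf
  have hinv : ∀ a ∈ K, (fderiv ℂ f (a, u a) ∘L .inr ℂ X Y).IsInvertible := by
    intro a ha
    obtain ⟨e, he⟩ := hiso a ha
    refine ⟨e, ?_⟩
    have h1 : HasFDerivAt (fun v : Y => (a, v)) (ContinuousLinearMap.inr ℂ X Y) (u a) :=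
      hasFDerivAt_prodMk_right a (u a)
    have h2 : HasFDerivAt (fun v : Y => P (v, a))
        (fderiv ℂ f (a, u a) ∘L ContinuousLinearMap.inr ℂ X Y) (u a) :=
      HasFDerivAt.comp (u a) (hf (a, u a)).hasFDerivAt h1
    exact he.unique h2
  -- local solutions
  have hloc : ∀ a ∈ K, ∃ h : X → Y, h a = u a ∧ (∀ᶠ b in nhds a, f (b, h b) = 0) ∧
      ContDiffAt ℂ 1 h a := by
    intro a ha
    have hc : ContDiffAt ℂ 1 f (a, u a) := hC.contDiffAt
    have h0 : f (a, u a) = 0 := hsol a ha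
    refine ⟨hc.implicitFunction one_ne_zero (hinv a ha),
      hc.implicitFunction_apply_self one_ne_zero (hinv a ha), ?_,
      hc.contDiffAt_implicitFunction one_ne_zero (hinv a ha)⟩
    have := hc.eventually_apply_implicitFunction one_ne_zero (hinv a ha)
    rwa [h0] at this
  have hlocinj : ∀ a ∈ K, ∃ s ∈ nhds (a, u a), Set.InjOn (fun q : X × Y => (f q, q.1)) s := by
    intro a ha
    have hs : HasStrictFDerivAt f (fderiv ℂ f (a, u a)) (a, u a) :=
      hC.contDiffAt.hasStrictFDerivAt one_ne_zero
    let φ := hs.implicitFunctionDataOfProdDomain (hinv a ha)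
    exact ⟨φ.toOpenPartialHomeomorph.source,
      φ.toOpenPartialHomeomorph.open_source.mem_nhds φ.pt_mem_toOpenPartialHomeomorph_source,
      φ.toOpenPartialHomeomorph.injOn⟩
  -- continuity of `u` on `K`
  have hucont : ContinuousOn u K := by
    intro a ha
    obtain ⟨h, h0, h1, h2⟩ := hloc a ha
    refine (h2.continuousAt.continuousWithinAt (s := K)).congr_of_eventuallyEq ?_ h0.symm
    filter_upwards [nhdsWithin_le_nhds h1, self_mem_nhdsWithin] with b hb hbK
    exact (huniq b hbK _ hb).symm
  have hG : IsCompact ((fun a => (a, u a)) '' K) :=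
    hK.image_of_continuousOn (continuousOn_id.prodMk hucont)
  obtain ⟨W, hWo, hGW, hWinj⟩ : ∃ W : Set (X × Y), IsOpen W ∧ ((fun a => (a, u a)) '' K) ⊆ W ∧
      Set.InjOn (fun q : X × Y => (f q, q.1)) W := by
    obtain ⟨t, ht, hti⟩ := Set.InjOn.exists_mem_nhdsSet
      (f := fun q : X × Y => (f q, q.1)) (s := (fun a => (a, u a)) '' K)
      (by
        rintro _ ⟨a, ha, rfl⟩ _ ⟨b, hb, rfl⟩ hab
        obtain rfl : a = b := congrArg Prod.snd hab
        rfl) hG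
      (fun q _ => (hf.continuous.prodMk continuous_fst).continuousAt)
      (by rintro _ ⟨a, ha, rfl⟩; exact hlocinj a ha)
    obtain ⟨W, h1, h2, h3⟩ := mem_nhdsSet_iff_exists.1 ht
    exact ⟨W, h1, h2, hti.mono h3⟩
  obtain ⟨B, hB⟩ := (hK.image_of_continuousOn hucont).isBounded.exists_norm_le
  let S : X → Y → Prop := fun b v => (b, v) ∈ W ∧ f (b, v) = 0 ∧ ‖v‖ < B + 1
  have hS : ∀ b v w, S b v → S b w → v = w := fun b v w hv hw => by
    have := hWinj hv.1 hw.1 (by simp [hv.2.1, hw.2.1])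
    exact congrArg Prod.snd this
  let g : X → Y := fun b => if h : ∃ v, S b v then h.choose else 0
  have hg : ∀ b v, S b v → g b = v := fun b v hv => by
    have h : ∃ v, S b v := ⟨v, hv⟩
    have : g b = h.choose := dif_pos h
    rw [this]
    exact hS b _ _ h.choose_spec hv
  have hSu : ∀ a ∈ K, S a (u a) := fun a ha =>
    ⟨hGW ⟨a, ha, rfl⟩, hsol a ha, (hB _ ⟨a, ha, rfl⟩).trans_lt (lt_add_one _)⟩
  have hN : ∀ a ∈ K, ∀ᶠ b in nhds a, S b (g b) ∧ DifferentiableAt ℂ g b := by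
    intro a ha
    obtain ⟨h, h0, h1, h2⟩ := hloc a ha
    have hc : ContinuousAt (fun b => (b, h b)) a := continuousAt_id.prodMk h2.continuousAt
    have e1 : ∀ᶠ b in nhds a, (b, h b) ∈ W :=
      hc.eventually_mem (hWo.mem_nhds (by rw [h0]; exact (hSu a ha).1))
    have e2 : ∀ᶠ b in nhds a, ‖h b‖ < B + 1 :=
      h2.continuousAt.norm.eventually_lt_const (by
        change ‖h a‖ < B + 1
        rw [h0]; exact (hSu a ha).2.2)
    have e3 : ∀ᶠ b in nhds a, DifferentiableAt ℂ h b := by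
      filter_upwards [h2.eventually (by simp)] with b hb
      exact hb.differentiableAt one_ne_zero
    have e4 : ∀ᶠ b in nhds a, S b (h b) := by
      filter_upwards [e1, h1, e2] with b x1 x2 x3
      exact ⟨x1, x2, x3⟩
    filter_upwards [e4.eventually_nhds, e3] with b hb hd
    have heq : g =ᶠ[nhds b] h := hb.mono fun c hc => hg c _ hc
    refine ⟨?_, hd.congr_of_eventuallyEq heq⟩
    rw [heq.self_of_nhds]
    exact hb.self_of_nhds
  refine ⟨interior {b | S b (g b) ∧ DifferentiableAt ℂ g b}, B + 1, g, isOpen_interior,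
    fun a ha => mem_interior_iff_mem_nhds.2 (hN a ha),
    fun b hb => (interior_subset hb).2.differentiableWithinAt,
    fun a ha => hg a _ (hSu a ha), fun b hb => (interior_subset hb).1.2.1,
    fun b hb => (interior_subset hb).1.2.2.le⟩
end

section
/- Let X be a complex Banach space, let K ⊆ X be compact, and let s > 1 be such that sup_{n≥1} n^s d_n(K)_X < ∞. Then there exist a constant C > 0 and a sequence (ψ_j)_{j≥1} in X with ‖ψ_j‖_X ≤ C j^{−s} for all j ≥ 1, such that every x ∈ K admits a representation x = Σ_{j≥1} z_j ψ_j with |z_j| ≤ 1 for all j (the series converging absolutely). In particular, (‖ψ_j‖_X)_{j≥1} ∈ ℓ_p(ℕ) for every p with sp > 1, and K ⊆ Q := {Σ_{j≥1} z_j ψ_j : z ∈ U}. -/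
lemma auerbach_aux {V : Type*} [NormedAddCommGroup V] [NormedSpace ℂ V] [FiniteDimensional ℂ V] :
    ∃ e : Fin (Module.finrank ℂ V) → V, (∀ i, ‖e i‖ ≤ 1) ∧
      ∀ v : V, ∃ c : Fin (Module.finrank ℂ V) → ℂ, (∀ i, ‖c i‖ ≤ ‖v‖) ∧ ∑ i, c i • e i = v := by
  classical
  have : ProperSpace V := FiniteDimensional.proper ℂ V
  let b := Module.finBasis ℂ V
  have hcomp : IsCompact (Set.pi Set.univ (fun _ : Fin (Module.finrank ℂ V) => Metric.closedBall (0:V) 1)) :=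
    isCompact_univ_pi (fun _ => isCompact_closedBall _ _)
  have hcont : Continuous (fun v : Fin (Module.finrank ℂ V) → V => ‖b.det v‖) := by
    have : Continuous (fun v : Fin (Module.finrank ℂ V) → V => b.det v) := by
      simp only [Module.Basis.det_apply]
      apply Continuous.matrix_det
      apply continuous_matrix
      intro i j
      simp only [Module.Basis.toMatrix_apply]
      exact (LinearMap.continuous_of_finiteDimensional (b.coord i)).comp (continuous_apply j)
    exact this.norm
  obtain ⟨e, he, hmax⟩ := hcomp.exists_isMaxOn ⟨0, by simp⟩ hcont.continuousOn
  have he1 : ∀ i, ‖e i‖ ≤ 1 := fun i => by simpa using he i (Set.mem_univ i)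
  have hmax' : ∀ v : Fin (Module.finrank ℂ V) → V, (∀ i, ‖v i‖ ≤ 1) → ‖b.det v‖ ≤ ‖b.det e‖ := by
    intro v hv
    exact hmax (show v ∈ _ from fun i _ => by simpa using hv i)
  have hne : b.det e ≠ 0 := by
    have h := hmax' (fun i => ((‖b i‖⁻¹ : ℝ) : ℂ) • b i) (fun i => by
      rw [norm_smul]; simp [b.ne_zero i])
    rw [AlternatingMap.map_smul_univ, b.det_self] at h
    intro h0
    rw [h0, norm_zero] at h
    have : (∏ i, ((‖b i‖⁻¹ : ℝ) : ℂ)) ≠ 0 := by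
      rw [Finset.prod_ne_zero_iff]
      intro i _
      simp [b.ne_zero i]
    have h3 := norm_le_zero_iff.1 h
    rw [smul_eq_mul, mul_one] at h3
    exact this h3
  obtain ⟨hli, hsp⟩ := (b.is_basis_iff_det).2 (isUnit_iff_ne_zero.2 hne)
  let E := Module.Basis.mk hli hsp.ge
  have hE : ∀ i, E i = e i := fun i => by simp [E]
  refine ⟨e, he1, fun v => ⟨fun i => E.repr v i, ?_, ?_⟩⟩
  · intro i
    have key : b.det (Function.update e i v) = E.repr v i * b.det e := by
      conv_lhs => rw [← E.sum_repr v]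
      rw [AlternatingMap.map_update_sum, Finset.sum_eq_single i]
      · rw [AlternatingMap.map_update_smul, hE, Function.update_eq_self, smul_eq_mul]
      · intro j _ hj
        rw [AlternatingMap.map_update_smul, hE, AlternatingMap.map_update_self _ _ hj.symm, smul_zero]
      · simp
    by_cases hv : v = 0
    · simp [hv]
    have hv' : ‖v‖ ≠ 0 := by simpa using hv
    have h := hmax' (Function.update e i (((‖v‖⁻¹ : ℝ) : ℂ) • v)) (by
      intro j
      by_cases hj : j = i
      · subst hj; simp [norm_smul, hv']
      · simp [hj, he1])
    rw [AlternatingMap.map_update_smul, key, norm_smul, norm_mul] at h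
    have hpos : 0 < ‖b.det e‖ := norm_pos_iff.2 hne
    have h2 : ‖v‖⁻¹ * ‖E.repr v i‖ ≤ 1 := by
      have : (‖v‖⁻¹ * ‖E.repr v i‖) * ‖b.det e‖ ≤ 1 * ‖b.det e‖ := by
        simpa [mul_assoc] using h
      exact le_of_mul_le_mul_right this hpos
    rw [inv_mul_le_iff₀ (by positivity)] at h2
    simpa using h2
  · simpa [hE] using E.sum_repr v

lemma auerbach_pad {X : Type*} [NormedAddCommGroup X] [NormedSpace ℂ X]
    (U : Submodule ℂ X) [FiniteDimensional ℂ U] (N : ℕ) (hN : Module.finrank ℂ U ≤ N) :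
    ∃ e : ℕ → X, (∀ i, ‖e i‖ ≤ 1) ∧
      ∀ v ∈ U, ∃ c : ℕ → ℂ, (∀ i, ‖c i‖ ≤ ‖v‖) ∧ ∑ i ∈ Finset.range N, c i • e i = v := by
  obtain ⟨e, he, h⟩ := auerbach_aux (V := U)
  refine ⟨fun i => if hi : i < Module.finrank ℂ U then (e ⟨i, hi⟩ : X) else 0, ?_, ?_⟩
  · intro i
    dsimp only
    split_ifs with hi
    · exact he _
    · simp
  · intro v hv
    obtain ⟨c, hc, hs⟩ := h ⟨v, hv⟩
    refine ⟨fun i => if hi : i < Module.finrank ℂ U then c ⟨i, hi⟩ else 0, ?_, ?_⟩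
    · intro i
      dsimp only
      split_ifs with hi
      · exact hc _
      · simp
    · rw [← Finset.sum_subset (Finset.range_subset_range.2 hN), Finset.sum_range]
      · have := congrArg (Subtype.val) hs
        simpa using this
      · intro i _ hi
        simp at hi
        simp [not_lt.2 hi]

lemma approx_space {X : Type*} [NormedAddCommGroup X] [NormedSpace ℂ X]
    (K : Set X) (M : ℝ) (hM : ∀ x ∈ K, ‖x‖ ≤ M) (n : ℕ) (hn : 1 ≤ n) (r : ℝ) (hr : 0 < r)
    (h : kolWidth n K < r) :
    ∃ W : Submodule ℂ X, FiniteDimensional ℂ W ∧ Module.finrank ℂ W ≤ n ∧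
      ∀ x ∈ K, ∃ w ∈ W, ‖x - w‖ ≤ r := by
  by_cases hne : Nonempty {W : Submodule ℂ X // Module.finrank ℂ ↥W = n}
  · obtain ⟨⟨W, hW⟩, hlt⟩ := exists_lt_of_ciInf_lt h
    refine ⟨W, Module.finite_of_finrank_pos (by omega), hW.le, fun x hx => ?_⟩
    have hbdd : ∀ x : X, BddBelow (Set.range fun w : W => ‖x - (w : X)‖) := fun x =>
      ⟨0, by rintro _ ⟨w, rfl⟩; exact norm_nonneg _⟩
    have hb : BddAbove (Set.range fun x : K => ⨅ w : W, ‖(x : X) - (w : X)‖) := by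
      refine ⟨M, ?_⟩
      rintro _ ⟨x, rfl⟩
      refine (ciInf_le (hbdd x) 0).trans ?_
      simpa using hM x x.2
    have h1 : (⨅ w : W, ‖x - (w : X)‖) < r := lt_of_le_of_lt (le_ciSup hb ⟨x, hx⟩) hlt
    obtain ⟨w, hw⟩ := exists_lt_of_ciInf_lt h1
    exact ⟨w, w.2, hw.le⟩
  · have hrank : Module.rank ℂ X < n := by
      by_contra hcon
      rw [not_lt] at hcon
      obtain ⟨t, ht, hli⟩ := le_rank_iff_exists_linearIndependent_finset.1 hcon
      exact hne ⟨⟨Submodule.span ℂ (t : Set X), by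
        rw [finrank_span_finset_eq_card hli, ht]⟩⟩
    have hfin : FiniteDimensional ℂ X :=
      Module.rank_lt_aleph0_iff.1 (hrank.trans (Cardinal.natCast_lt_aleph0))
    refine ⟨⊤, inferInstance, ?_, fun x _ => ⟨x, trivial, by simpa using hr.le⟩⟩
    rw [finrank_top]
    rw [← Module.finrank_eq_rank] at hrank
    exact (Nat.cast_lt.1 hrank).le

lemma dyadic_spaces {X : Type*} [NormedAddCommGroup X] [NormedSpace ℂ X]
    (K : Set X) (hK : IsCompact K) (s : ℝ) (hs : 1 < s)
    (hwidth : ∃ C : ℝ, ∀ n : ℕ, 1 ≤ n → (n : ℝ) ^ s * kolWidth n K ≤ C) :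
    ∃ R : ℝ, 0 < R ∧ ∀ k : ℕ, ∃ W : Submodule ℂ X, FiniteDimensional ℂ W ∧
      Module.finrank ℂ W ≤ 2 ^ k / 4 ∧
      ∀ x ∈ K, ∃ w ∈ W, ‖x - w‖ ≤ R * ((2 : ℝ) ^ k) ^ (-s) := by
  obtain ⟨M, hM⟩ := hK.isBounded.exists_norm_le
  obtain ⟨C, hC⟩ := hwidth
  have h4 : (0:ℝ) < 4 ^ s := by positivity
  refine ⟨(|M| + |C| + 1) * 4 ^ s, by positivity, fun k => ?_⟩
  by_cases hk : k < 2
  · refine ⟨⊥, inferInstance, by simp, fun x hx => ⟨0, by simp, ?_⟩⟩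
    have h2 : (2:ℝ) ^ k ≤ 4 := by interval_cases k <;> norm_num
    have h1 : (4:ℝ) ^ (-s) ≤ ((2:ℝ) ^ k) ^ (-s) :=
      Real.rpow_le_rpow_of_nonpos (by positivity) h2 (by linarith)
    calc ‖x - 0‖ ≤ |M| + |C| + 1 := by
          rw [sub_zero]
          have := hM x hx
          have := le_abs_self M
          have := abs_nonneg C
          linarith
      _ = (|M| + |C| + 1) * 4 ^ s * 4 ^ (-s) := by
          rw [mul_assoc, ← Real.rpow_add (by norm_num)]; simp
      _ ≤ _ := by gcongr
  · obtain ⟨m, rfl⟩ : ∃ m, k = m + 2 := ⟨k - 2, by omega⟩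
    have hn : (0:ℝ) < ((2 ^ m : ℕ) : ℝ) := by positivity
    have hr : 0 < (|M| + |C| + 1) * ((2 ^ m : ℕ) : ℝ) ^ (-s) := by positivity
    obtain ⟨W, hW, hd, hx⟩ := approx_space K M hM (2 ^ m) Nat.one_le_two_pow _ hr (by
      rw [Real.rpow_neg hn.le, ← div_eq_mul_inv, lt_div_iff₀ (by positivity), mul_comm]
      have := hC (2 ^ m) Nat.one_le_two_pow
      have := le_abs_self C
      have := abs_nonneg M
      linarith)
    refine ⟨W, hW, hd.trans (by rw [pow_add]; omega), fun x hxK => ?_⟩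
    obtain ⟨w, hw, hle⟩ := hx x hxK
    refine ⟨w, hw, hle.trans (le_of_eq ?_)⟩
    rw [pow_add, Real.mul_rpow (by positivity) (by positivity)]
    norm_num
    rw [mul_assoc, mul_comm _ ((4:ℝ) ^ (-s)), ← mul_assoc ((4:ℝ)^s), ← Real.rpow_add (by norm_num)]
    simp

/-- If `K` is a compact subset of a complex Banach space `X` with
`sup_{n ≥ 1} n^s d_n(K)_X < ∞` for some `s > 1`, then there exist `C > 0` and a sequence
`(ψ_j)_{j ≥ 1}` in `X` with `‖ψ_j‖ ≤ C j^{-s}` such that every `x ∈ K` can be written as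
`x = Σ_j z_j ψ_j` with `|z_j| ≤ 1` (absolutely convergent series); in particular
`(‖ψ_j‖)_j ∈ ℓ_p(ℕ)` whenever `s p > 1` (`p > 0`).
(Sequences are indexed by `ℕ`, index `j ∈ ℕ` corresponding to the `(j+1)`-st term, so the
decay bound reads `‖ψ_j‖ ≤ C (j+1)^{-s}`.) -/
theorem exists_box_cover_of_kolWidth_decay
    {X : Type*} [NormedAddCommGroup X] [NormedSpace ℂ X] [CompleteSpace X]
    (K : Set X) (hK : IsCompact K) (s : ℝ) (hs : 1 < s)
    (hwidth : ∃ C : ℝ, ∀ n : ℕ, 1 ≤ n → (n : ℝ) ^ s * kolWidth n K ≤ C) :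
    ∃ (C : ℝ) (ψ : ℕ → X), 0 < C ∧
      (∀ j : ℕ, ‖ψ j‖ ≤ C * ((j : ℝ) + 1) ^ (-s)) ∧
      (∀ x ∈ K, ∃ z : ℕ → ℂ, (∀ j, ‖z j‖ ≤ 1) ∧ HasSum (fun j => z j • ψ j) x) ∧
      (∀ p : ℝ, 0 < p → 1 < s * p → Summable fun j => ‖ψ j‖ ^ p) := by
  obtain ⟨R, hR, hW⟩ := dyadic_spaces K hK s hs hwidth
  choose W hWfin hWdim hWx using hW
  have hU : ∀ k, Module.finrank ℂ ↥(W k ⊔ W (k + 1)) ≤ 2 ^ k := fun k => by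
    refine (Submodule.finrank_add_le_finrank_add_finrank _ _).trans ?_
    have h1 := hWdim k
    have h2 := hWdim (k + 1)
    rw [pow_succ] at h2
    omega
  have hA := fun k => auerbach_pad (W k ⊔ W (k + 1)) (2 ^ k) (hU k)
  choose e he hc using hA
  set ρ : ℕ → ℝ := fun k => 2 * R * ((2 : ℝ) ^ k) ^ (-s) with hρ
  have hρpos : ∀ k, 0 < ρ k := fun k => by simp only [hρ]; positivity
  set ψ : ℕ → X := fun j =>
    ((ρ (Nat.log 2 (j + 1)) : ℝ) : ℂ) • e (Nat.log 2 (j + 1)) (j + 1 - 2 ^ (Nat.log 2 (j + 1)))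
    with hψ
  have hψle : ∀ j : ℕ, ‖ψ j‖ ≤ (2 * R * 2 ^ s) * ((j : ℝ) + 1) ^ (-s) := by
    intro j
    set k := Nat.log 2 (j + 1) with hk
    have h1 : ‖ψ j‖ ≤ ρ k := by
      simp only [hψ, norm_smul, Complex.norm_real, Real.norm_eq_abs, abs_of_pos (hρpos _)]
      exact mul_le_of_le_one_right (hρpos _).le (he _ _)
    refine h1.trans ?_
    have h2 : j + 1 < 2 ^ (k + 1) := Nat.lt_pow_succ_log_self (by norm_num) _
    have h3 : (j : ℝ) + 1 ≤ (2 : ℝ) ^ (k + 1) := by exact_mod_cast h2.le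
    have h4 : ((2 : ℝ) ^ (k + 1)) ^ (-s) ≤ ((j : ℝ) + 1) ^ (-s) :=
      Real.rpow_le_rpow_of_nonpos (by positivity) h3 (by linarith)
    calc ρ k = (2 * R * 2 ^ s) * ((2 : ℝ) ^ (k + 1)) ^ (-s) := by
          simp only [hρ]
          rw [pow_succ, Real.mul_rpow (by positivity) (by positivity), mul_comm (((2:ℝ)^k)^(-s)),
            mul_assoc (2 * R), ← mul_assoc ((2:ℝ)^s), ← Real.rpow_add (by norm_num)]
          simp
      _ ≤ _ := by gcongr
  have hsum : ∀ q : ℝ, 1 < q → Summable (fun j : ℕ => ((j : ℝ) + 1) ^ (-q)) := by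
    intro q hq
    have := (summable_nat_add_iff 1).2 (Real.summable_nat_rpow.2 (show -q < -1 by linarith))
    simpa using this
  refine ⟨2 * R * 2 ^ s, ψ, by positivity, hψle, ?_, ?_⟩
  · intro x hx
    choose w hwW hwx using fun k => hWx k x hx
    have hw0 : w 0 = 0 := by
      have h0 : Module.finrank ℂ (W 0) = 0 := by simpa using hWdim 0
      have := Submodule.finrank_eq_zero.1 h0
      have h := hwW 0
      rw [this] at h
      simpa using h
    have hu : ∀ k, w (k + 1) - w k ∈ W k ⊔ W (k + 1) := fun k =>
      Submodule.sub_mem _ (Submodule.mem_sup_right (hwW _)) (Submodule.mem_sup_left (hwW _))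
    have hun : ∀ k, ‖w (k + 1) - w k‖ ≤ ρ k := by
      intro k
      have h1 := hwx k
      have h2 := hwx (k + 1)
      have h3 : ((2 : ℝ) ^ (k + 1)) ^ (-s) ≤ ((2 : ℝ) ^ k) ^ (-s) :=
        Real.rpow_le_rpow_of_nonpos (by positivity)
          (pow_le_pow_right₀ (by norm_num) (by omega)) (by linarith)
      have h4 := mul_le_mul_of_nonneg_left h3 hR.le
      have h5 : w (k + 1) - w k = (x - w k) - (x - w (k + 1)) := by abel
      rw [h5]
      refine (norm_sub_le _ _).trans ?_
      simp only [hρ]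
      linarith
    choose c hcn hcs using fun k => hc k _ (hu k)
    set z : ℕ → ℂ := fun j => (((ρ (Nat.log 2 (j + 1)))⁻¹ : ℝ) : ℂ) *
      c (Nat.log 2 (j + 1)) (j + 1 - 2 ^ (Nat.log 2 (j + 1))) with hz
    have hz1 : ∀ j, ‖z j‖ ≤ 1 := by
      intro j
      simp only [hz, norm_mul, Complex.norm_real, Real.norm_eq_abs,
        abs_of_pos (inv_pos.2 (hρpos _))]
      rw [inv_mul_le_iff₀ (hρpos _), mul_one]
      exact (hcn _ _).trans (hun _)
    refine ⟨z, hz1, ?_⟩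
    have hsm : Summable (fun j => z j • ψ j) := by
      refine Summable.of_norm_bounded ((hsum s hs).mul_left (2 * R * 2 ^ s)) fun j => ?_
      rw [norm_smul]
      exact (mul_le_of_le_one_left (norm_nonneg _) (hz1 j)).trans (hψle j)
    have hterm : ∀ k, ∀ i ∈ Finset.range (2 ^ k),
        z (2 ^ k - 1 + i) • ψ (2 ^ k - 1 + i) = c k i • e k i := by
      intro k i hi
      have hi' : i < 2 ^ k := Finset.mem_range.1 hi
      have hpos : 1 ≤ 2 ^ k := Nat.one_le_two_pow
      have e1 : 2 ^ k - 1 + i + 1 = 2 ^ k + i := by omega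
      have e2 : Nat.log 2 (2 ^ k + i) = k := by
        rw [Nat.log_eq_iff (Or.inr ⟨by norm_num, by omega⟩)]
        rw [pow_succ]
        omega
      simp only [hz, hψ, e1, e2, Nat.add_sub_cancel_left, smul_smul]
      have : ((ρ k : ℝ) : ℂ) ≠ 0 := by exact_mod_cast (hρpos k).ne'
      congr 1
      push_cast
      field_simp
    have hpart : ∀ N, ∑ j ∈ Finset.range (2 ^ N - 1), z j • ψ j = w N := by
      intro N
      induction N with
      | zero => simp [hw0]
      | succ N ih =>
        have hpos : 1 ≤ 2 ^ N := Nat.one_le_two_pow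
        have e1 : 2 ^ (N + 1) - 1 = (2 ^ N - 1) + 2 ^ N := by rw [pow_succ]; omega
        rw [e1, Finset.sum_range_add, ih, Finset.sum_congr rfl (hterm N), hcs N]
        abel
    have hρ0 : Filter.Tendsto (fun k : ℕ => R * ((2 : ℝ) ^ k) ^ (-s)) Filter.atTop (nhds 0) := by
      have h1 : Filter.Tendsto (fun k : ℕ => (2 : ℝ) ^ k) Filter.atTop Filter.atTop :=
        tendsto_pow_atTop_atTop_of_one_lt (by norm_num)
      have h2 := (tendsto_rpow_neg_atTop (show 0 < s by linarith)).comp h1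
      simpa using h2.const_mul R
    have hwlim : Filter.Tendsto w Filter.atTop (nhds x) := by
      rw [tendsto_iff_norm_sub_tendsto_zero]
      refine squeeze_zero (fun _ => norm_nonneg _) (fun k => ?_) hρ0
      rw [norm_sub_rev]
      exact hwx k
    have hidx : Filter.Tendsto (fun N : ℕ => 2 ^ N - 1) Filter.atTop Filter.atTop := by
      refine Filter.tendsto_atTop_mono (fun N => ?_) Filter.tendsto_id
      have : N < 2 ^ N := Nat.lt_two_pow_self
      simp only [id]
      omega
    have hl := hsm.hasSum.tendsto_sum_nat.comp hidx
    have hl' : Filter.Tendsto w Filter.atTop (nhds (∑' j, z j • ψ j)) :=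
      hl.congr fun N => hpart N
    rw [tendsto_nhds_unique hwlim hl']
    exact hsm.hasSum
  · intro p hp hsp
    refine Summable.of_nonneg_of_le (fun j => by positivity) (fun j => ?_)
      ((hsum (s * p) hsp).mul_left ((2 * R * 2 ^ s) ^ p))
    calc ‖ψ j‖ ^ p ≤ ((2 * R * 2 ^ s) * ((j : ℝ) + 1) ^ (-s)) ^ p :=
          Real.rpow_le_rpow (norm_nonneg _) (hψle j) hp.le
      _ = _ := by
          rw [Real.mul_rpow (by positivity) (by positivity), ← Real.rpow_mul (by positivity)]
          ring_nf
end

section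
/- Let F be a countable index set, let 0 < p < 1, set t := 1/p − 1, and let (a_ν)_{ν∈F} be a family of nonnegative real numbers tending to 0 along any enumeration (so that for each n a set Λ_n ⊆ F of indices of n largest values a_ν exists). Then (a_ν)_{ν∈F} ∈ ℓ_p(F) (i.e., Σ_{ν∈F} a_ν^p < ∞) if and only if Σ_{n≥1} (n^t Σ_{ν∉Λ_n} a_ν)^p n^{−1} < ∞, where for each n ≥ 1, Λ_n ⊆ F is a set of cardinality n containing indices of the n largest values a_ν. -/
open ENNReal

section Helpers

variable {F : Type*}

/-- Subadditivity of `x ↦ x ^ p` for infinite sums. -/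
lemma aux_rpow_tsum_le {ι : Type*} (p : ℝ) (hp0 : 0 < p) (hp1 : p < 1) (x : ι → ℝ≥0∞) :
    (∑' i, x i) ^ p ≤ ∑' i, x i ^ p := by
  classical
  rw [← ENNReal.le_rpow_inv_iff hp0, ENNReal.tsum_eq_iSup_sum]
  refine iSup_le fun s => ?_
  rw [ENNReal.le_rpow_inv_iff hp0]
  refine le_trans ?_ (ENNReal.sum_le_tsum s)
  induction s using Finset.induction_on with
  | empty => simp [hp0]
  | insert i s hi ih =>
    rw [Finset.sum_insert hi, Finset.sum_insert hi]
    exact (ENNReal.rpow_add_le_add_rpow _ _ hp0.le hp1.le).trans (by gcongr)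

/-- Dyadic bound for the tails. -/
lemma aux_tail (Λ : ℕ → Finset F) (hcard : ∀ n, (Λ n).card = n) (f : F → ℝ≥0∞)
    (hz : ∀ ν, f ν ≠ 0 → ∃ N, ∀ n ≥ N, ν ∈ Λ n) (B : ℕ → ℝ≥0∞)
    (hB : ∀ n, ∀ ν ∉ Λ n, f ν ≤ B n) (m : ℕ) (hm : 1 ≤ m) :
    ∑' ν : {ν : F // ν ∉ Λ m}, f ν.1 ≤
      ∑' j : ℕ, ((2 : ℝ≥0∞) ^ (j + 1) * m) * B (2 ^ j * m) := by
  classical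
  have h1 : ∑' ν : {ν : F // ν ∉ Λ m}, f ν.1 = ∑' ν, {ν | ν ∉ Λ m}.indicator f ν :=
    tsum_subtype {ν | ν ∉ Λ m} f
  rw [h1]
  let S : ℕ → Finset F := fun j => Λ (2 ^ (j + 1) * m) \ Λ (2 ^ j * m)
  have h2 : ∀ ν, {ν | ν ∉ Λ m}.indicator f ν ≤ ∑' j, (if ν ∈ S j then f ν else 0) := by
    intro ν
    by_cases hν : ν ∈ Λ m
    · simp [Set.indicator, hν]
    by_cases h0 : f ν = 0
    · simp [Set.indicator, h0]
    have hex : ∃ j, ν ∈ Λ (2 ^ j * m) := by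
      obtain ⟨N, hN⟩ := hz ν h0
      refine ⟨N, hN _ ?_⟩
      have : N < 2 ^ N := Nat.lt_two_pow_self
      nlinarith
    have hs := Nat.find_spec hex
    have hmin := fun k => @Nat.find_min _ _ hex k
    generalize Nat.find hex = j at hs hmin
    cases j with
    | zero => simp [hν] at hs
    | succ j =>
      have : ν ∈ S j := Finset.mem_sdiff.2 ⟨hs, hmin j (by omega)⟩
      refine le_trans ?_ (ENNReal.le_tsum j)
      simp [Set.indicator, hν, this]
  refine (ENNReal.tsum_le_tsum h2).trans ?_
  rw [ENNReal.tsum_comm]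
  refine ENNReal.tsum_le_tsum fun j => ?_
  rw [tsum_eq_sum (s := S j) (by intro b hb; simp [hb])]
  calc ∑ ν ∈ S j, (if ν ∈ S j then f ν else 0) ≤ ∑ ν ∈ S j, B (2 ^ j * m) := by
        refine Finset.sum_le_sum fun ν hν => ?_
        rw [if_pos hν]
        exact hB _ _ (Finset.mem_sdiff.1 hν).2
    _ = ((S j).card : ℝ≥0∞) * B (2 ^ j * m) := by simp
    _ ≤ _ := by
        gcongr
        have : (S j).card ≤ 2 ^ (j + 1) * m :=
          (Finset.card_le_card Finset.sdiff_subset).trans (hcard _).le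
        exact_mod_cast this

/-- Values outside `Λ k` are bounded by the values in `Λ (k + 1)`. -/
lemma aux_succ (Λ : ℕ → Finset F) (hcard : ∀ n, (Λ n).card = n) (f : F → ℝ≥0∞)
    (hmax : ∀ n, ∀ ν ∈ Λ n, ∀ μ ∉ Λ n, f μ ≤ f ν) (k : ℕ) (ν : F) (hν : ν ∈ Λ (k + 1))
    (μ : F) (hμ : μ ∉ Λ k) : f μ ≤ f ν := by
  classical
  by_cases h1 : ν ∈ Λ k
  · exact hmax k ν h1 μ hμ
  by_cases h2 : μ ∈ Λ (k + 1)
  swap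
  · exact hmax _ ν hν μ h2
  by_cases h3 : μ = ν
  · rw [h3]
  have : ∃ κ ∈ Λ k, κ ∉ Λ (k + 1) := by
    by_contra! hc
    have hsub : insert μ (insert ν (Λ k)) ⊆ Λ (k + 1) := by
      intro x hx
      simp only [Finset.mem_insert] at hx
      rcases hx with rfl | rfl | hx
      · exact h2
      · exact hν
      · exact hc x hx
    have := Finset.card_le_card hsub
    rw [Finset.card_insert_of_notMem (by simp [h3, hμ]), Finset.card_insert_of_notMem h1,
      hcard, hcard] at this
    omega
  obtain ⟨κ, hκ, hκ'⟩ := this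
  exact (hmax k κ hκ μ hμ).trans (hmax _ ν hν κ hκ')

/-- The sum of the rearranged sequence is bounded by the sum of the family. -/
lemma aux_sum_le (Λ : ℕ → Finset F) (hcard : ∀ n, (Λ n).card = n) (f : F → ℝ≥0∞)
    (g : ℕ → ℝ≥0∞) (hg : ∀ k, ∀ ν ∈ Λ (k + 1), g k ≤ f ν) :
    ∑' k, g k ≤ ∑' ν, f ν := by
  classical
  obtain ⟨e, he, hm⟩ := (Finset.all_card_le_biUnion_card_iff_exists_injective
    (fun k => Λ (k + 1))).1 (by
      intro s
      rcases s.eq_empty_or_nonempty with rfl | hs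
      · simp
      · have h1 : s ⊆ Finset.range (s.max' hs + 1) := by
          intro x hx
          have := s.le_max' x hx
          simp; omega
        have h2 := Finset.card_le_card h1
        rw [Finset.card_range, ← hcard (s.max' hs + 1)] at h2
        exact h2.trans (Finset.card_le_card
          (Finset.subset_biUnion_of_mem (fun k => Λ (k + 1)) (s.max'_mem hs))))
  exact (ENNReal.tsum_le_tsum fun k => hg k _ (hm k)).trans
    (ENNReal.tsum_comp_le_tsum_of_injective he f)

lemma aux_block (g : ℕ → ℝ≥0∞) (hg : Antitone g) (d : ℕ) (hd : d ≠ 0) :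
    (d : ℝ≥0∞) * ∑' n : ℕ, g (d * (n + 1)) ≤ ∑' k, g k := by
  have : NeZero d := ⟨hd⟩
  rw [← (Nat.divModEquiv d).symm.tsum_eq g,
    ENNReal.tsum_prod (f := fun a b => g ((Nat.divModEquiv d).symm (a, b))), ← ENNReal.tsum_mul_left]
  refine ENNReal.tsum_le_tsum fun n => ?_
  rw [tsum_fintype]
  calc (d : ℝ≥0∞) * g (d * (n + 1)) = ∑ _i : Fin d, g (d * (n + 1)) := by simp
    _ ≤ _ := by
      refine Finset.sum_le_sum fun i _ => hg ?_
      have := i.2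
      simp only [Nat.divModEquiv_symm_apply]
      nlinarith

lemma aux_term (p t : ℝ) (hp0 : 0 < p) (ht : t = 1 / p - 1) (n : ℕ) (s : ℝ≥0∞) :
    ((n + 1 : ℝ≥0∞) ^ t * s) ^ p / (n + 1 : ℝ≥0∞) = (s / (n + 1 : ℝ≥0∞)) ^ p := by
  have h0 : (n + 1 : ℝ≥0∞) ≠ 0 := by simp
  have h1 : (n + 1 : ℝ≥0∞) ≠ ∞ := by simp
  have htp : t * p = 1 + -p - 0 := by rw [ht]; field_simp; ring
  rw [ENNReal.mul_rpow_of_nonneg _ _ hp0.le, ENNReal.div_rpow_of_nonneg _ _ hp0.le,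
    ← ENNReal.rpow_mul, htp, sub_zero, ENNReal.rpow_add _ _ h0 h1, ENNReal.rpow_one,
    ENNReal.rpow_neg, ENNReal.div_eq_inv_mul, ENNReal.div_eq_inv_mul, ← mul_assoc, ← mul_assoc,
    ENNReal.inv_mul_cancel h0 h1, one_mul]

lemma aux_main (p : ℝ) (hp0 : 0 < p) (hp1 : p < 1) (A : F → ℝ≥0∞) (hA : ∀ ν, A ν ≠ ∞)
    (Λ : ℕ → Finset F) (hcard : ∀ n, (Λ n).card = n)
    (hmax : ∀ n, ∀ ν ∈ Λ n, ∀ μ ∉ Λ n, A μ ≤ A ν)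
    (hz : ∀ ν, A ν ≠ 0 → ∃ N, ∀ n ≥ N, ν ∈ Λ n) :
    (∑' ν, A ν ^ p) ≠ ∞ ↔
      (∑' n : ℕ, ((∑' ν : {ν : F // ν ∉ Λ (n + 1)}, A ν.1) / (n + 1 : ℝ≥0∞)) ^ p) ≠ ∞ := by
  classical
  obtain ⟨c, hc⟩ : ∃ c : ℕ → ℝ≥0∞, c = fun k => ⨆ ν, ⨆ _ : ν ∉ Λ k, A ν := ⟨_, rfl⟩
  have hcle : ∀ k, ∀ ν ∉ Λ k, A ν ≤ c k := by
    intro k ν hν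
    rw [hc]
    exact le_iSup₂ (f := fun ν (_ : ν ∉ Λ k) => A ν) ν hν
  have hcl : ∀ k x, (∀ ν ∉ Λ k, A ν ≤ x) → c k ≤ x := by
    intro k x h
    rw [hc]
    exact iSup₂_le h
  have hcs : ∀ k, ∀ ν ∈ Λ (k + 1), c k ≤ A ν := fun k ν hν =>
    hcl k _ (fun μ hμ => aux_succ Λ hcard A hmax k ν hν μ hμ)
  have hanti : Antitone c := by
    refine antitone_nat_of_succ_le fun k => hcl _ _ fun μ hμ => ?_
    obtain ⟨ν, hν, hν'⟩ : ∃ ν ∈ Λ (k + 1), ν ∉ Λ k := by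
      by_contra! h
      have := Finset.card_le_card h
      rw [hcard, hcard] at this
      omega
    exact (hmax _ ν hν μ hμ).trans (hcle k ν hν')
  have hc0 : c 0 ≠ ∞ := by
    obtain ⟨ν, hν⟩ : (Λ (0 + 1)).Nonempty := by
      rw [← Finset.card_pos, hcard]; simp
    exact ne_top_of_le_ne_top (hA ν) (hcs 0 ν hν)
  have hctop : ∀ k, c k ≠ ∞ := fun k => ne_top_of_le_ne_top hc0 (hanti (Nat.zero_le k))
  have hganti : Antitone (fun k => c k ^ p) := fun i j hij =>
    ENNReal.rpow_le_rpow (hanti hij) hp0.le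
  have hgtop : ∀ k, c k ^ p ≠ ∞ := fun k => ENNReal.rpow_ne_top_of_nonneg hp0.le (hctop k)
  constructor
  · intro hS
    have hG : ∑' k, c k ^ p ≠ ∞ := ne_top_of_le_ne_top hS
      (aux_sum_le Λ hcard _ _ fun k ν hν => ENNReal.rpow_le_rpow (hcs k ν hν) hp0.le)
    have hterm : ∀ n : ℕ, ((∑' ν : {ν : F // ν ∉ Λ (n + 1)}, A ν.1) / (n + 1 : ℝ≥0∞)) ^ p ≤
        ∑' j : ℕ, ((2 : ℝ≥0∞) ^ (j + 1)) ^ p * c (2 ^ j * (n + 1)) ^ p := by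
      intro n
      have h0 : (n + 1 : ℝ≥0∞) ≠ 0 := by simp
      have h1 : (n + 1 : ℝ≥0∞) ≠ ∞ := by simp
      have h2 : (∑' ν : {ν : F // ν ∉ Λ (n + 1)}, A ν.1) / (n + 1 : ℝ≥0∞) ≤
          ∑' j : ℕ, (2 : ℝ≥0∞) ^ (j + 1) * c (2 ^ j * (n + 1)) := by
        refine ENNReal.div_le_of_le_mul ?_
        refine (aux_tail Λ hcard A hz c hcle (n + 1) (by omega)).trans ?_
        rw [← ENNReal.tsum_mul_right]
        refine ENNReal.tsum_le_tsum fun j => le_of_eq ?_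
        push_cast
        ring
      refine (ENNReal.rpow_le_rpow h2 hp0.le).trans ((aux_rpow_tsum_le p hp0 hp1 _).trans ?_)
      refine ENNReal.tsum_le_tsum fun j => le_of_eq ?_
      rw [ENNReal.mul_rpow_of_nonneg _ _ hp0.le]
    refine ne_top_of_le_ne_top ?_ (ENNReal.tsum_le_tsum hterm)
    rw [ENNReal.tsum_comm]
    have hj : ∀ j : ℕ, ∑' n : ℕ, ((2 : ℝ≥0∞) ^ (j + 1)) ^ p * c (2 ^ j * (n + 1)) ^ p ≤
        ((2 : ℝ≥0∞) ^ (p - 1)) ^ j * ((2 : ℝ≥0∞) ^ p * ∑' k, c k ^ p) := by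
      intro j
      have hb := aux_block _ hganti (2 ^ j) (by positivity)
      rw [ENNReal.tsum_mul_left]
      have hpow : ((2 : ℝ≥0∞) ^ (j + 1)) ^ p =
          ((2 : ℝ≥0∞) ^ (p - 1)) ^ j * (2 : ℝ≥0∞) ^ p * ((2 ^ j : ℕ) : ℝ≥0∞) := by
        push_cast
        rw [← ENNReal.rpow_natCast, ← ENNReal.rpow_natCast, ← ENNReal.rpow_natCast,
          ← ENNReal.rpow_mul, ← ENNReal.rpow_mul, ← ENNReal.rpow_add _ _ (by simp) (by simp),
          ← ENNReal.rpow_add _ _ (by simp) (by simp)]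
        congr 1
        push_cast
        ring
      rw [hpow, mul_assoc, mul_assoc]
      gcongr
    refine ne_top_of_le_ne_top ?_ (ENNReal.tsum_le_tsum hj)
    rw [ENNReal.tsum_mul_right, ENNReal.tsum_geometric]
    refine ENNReal.mul_ne_top ?_ (ENNReal.mul_ne_top (by simp) hG)
    rw [ENNReal.inv_ne_top, Ne, tsub_eq_zero_iff_le, not_le]
    exact ENNReal.rpow_lt_one_of_one_lt_of_neg (by norm_num) (by linarith)
  · intro hS
    have hterm : ∀ n : ℕ, c (2 * (n + 1)) ≤
        (∑' ν : {ν : F // ν ∉ Λ (n + 1)}, A ν.1) / (n + 1 : ℝ≥0∞) := by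
      intro n
      rw [ENNReal.le_div_iff_mul_le (by simp) (by simp)]
      have h1 : ∑' ν : {ν : F // ν ∉ Λ (n + 1)}, A ν.1 =
          ∑' ν, {ν | ν ∉ Λ (n + 1)}.indicator A ν := tsum_subtype {ν | ν ∉ Λ (n + 1)} A
      rw [h1]
      refine le_trans ?_ (ENNReal.sum_le_tsum (Λ (2 * (n + 1)) \ Λ (n + 1)))
      have hcd : n + 1 ≤ (Λ (2 * (n + 1)) \ Λ (n + 1)).card := by
        have := Finset.le_card_sdiff (Λ (n + 1)) (Λ (2 * (n + 1)))
        rw [hcard, hcard] at this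
        omega
      calc c (2 * (n + 1)) * (n + 1 : ℝ≥0∞)
          ≤ c (2 * (n + 1)) * ((Λ (2 * (n + 1)) \ Λ (n + 1)).card : ℝ≥0∞) := by
            gcongr
            exact_mod_cast hcd
        _ = ∑ ν ∈ Λ (2 * (n + 1)) \ Λ (n + 1), c (2 * (n + 1)) := by simp [mul_comm]
        _ ≤ _ := by
            refine Finset.sum_le_sum fun ν hν => ?_
            rw [Finset.mem_sdiff] at hν
            rw [Set.indicator_of_mem (by exact hν.2)]
            exact hcl _ _ fun μ hμ => hmax _ ν hν.1 μ hμ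
    have hH : ∑' k, c (2 * k) ^ p ≠ ∞ := by
      rw [tsum_eq_zero_add' ENNReal.summable]
      refine ENNReal.add_ne_top.2 ⟨hgtop _, ne_top_of_le_ne_top hS ?_⟩
      exact ENNReal.tsum_le_tsum fun n => ENNReal.rpow_le_rpow (hterm n) hp0.le
    have hcond := ENNReal.tsum_condensed_le (f := fun k => c (2 * k) ^ p)
      (fun m n _ h => hganti (by omega))
    have hK : ∑' j : ℕ, (2 : ℝ≥0∞) ^ j * c (2 * 2 ^ j) ^ p ≠ ∞ := by
      refine ne_top_of_le_ne_top ?_ hcond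
      exact ENNReal.add_ne_top.2 ⟨hgtop _, ENNReal.mul_ne_top (by simp) hH⟩
    have htail := aux_tail Λ hcard (fun ν => A ν ^ p)
      (fun ν h => hz ν (by rintro h0; simp [h0, hp0] at h)) (fun k => c k ^ p)
      (fun k ν hν => ENNReal.rpow_le_rpow (hcle k ν hν) hp0.le) 1 le_rfl
    have hT : ∑' ν : {ν : F // ν ∉ Λ 1}, A ν.1 ^ p ≠ ∞ := by
      refine ne_top_of_le_ne_top ?_ htail
      rw [tsum_eq_zero_add' ENNReal.summable]
      refine ENNReal.add_ne_top.2 ⟨ENNReal.mul_ne_top (by simp) (hgtop _), ?_⟩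
      have : ∀ j : ℕ, ((2 : ℝ≥0∞) ^ (j + 1 + 1) * (1 : ℕ)) * c (2 ^ (j + 1) * 1) ^ p =
          4 * ((2 : ℝ≥0∞) ^ j * c (2 * 2 ^ j) ^ p) := by
        intro j
        rw [mul_one, pow_succ' 2 j, pow_succ, pow_succ]
        push_cast
        ring
      simp only [this]
      rw [ENNReal.tsum_mul_left]
      exact ENNReal.mul_ne_top (by simp) hK
    rw [← ENNReal.sum_add_tsum_compl (s := Λ 1)]
    refine ENNReal.add_ne_top.2 ⟨?_, hT⟩
    exact ENNReal.sum_ne_top.2 fun ν _ => ENNReal.rpow_ne_top_of_nonneg hp0.le (hA ν)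

end Helpers

/-- **Best `n`-term approximation / Stechkin-type characterization.**  Let `F` be a countable
index set, `0 < p < 1`, `t := 1/p - 1`, and let `(a_ν)_{ν ∈ F}` be nonnegative reals tending
to `0` (along the cofinite filter), with `Λ_n ⊆ F` a set of `n` indices of largest values.
Then `(a_ν) ∈ ℓ_p(F)`, i.e. `Σ_ν a_ν^p < ∞`, if and only if
`Σ_{n ≥ 1} (n^t Σ_{ν ∉ Λ_n} a_ν)^p n^{-1} < ∞`.  (Sums of nonnegative terms are taken in
`ℝ≥0∞` so that "`< ∞`" is meaningful; the sum over `n ≥ 1` is indexed by `n + 1`, `n ∈ ℕ`.) -/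
theorem lp_iff_rest_sum_summable
    {F : Type*} [Countable F] (p t : ℝ) (hp0 : 0 < p) (hp1 : p < 1)
    (ht : t = 1 / p - 1)
    (a : F → ℝ) (ha : ∀ ν, 0 ≤ a ν)
    (ha0 : Filter.Tendsto a Filter.cofinite (nhds 0))
    (Λ : ℕ → Finset F) (hcard : ∀ n, (Λ n).card = n)
    (hmax : ∀ n, ∀ ν ∈ Λ n, ∀ μ ∉ Λ n, a μ ≤ a ν) :
    (∑' ν : F, ENNReal.ofReal (a ν ^ p)) ≠ ∞ ↔
      (∑' n : ℕ, ((n + 1 : ℝ≥0∞) ^ t *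
        ∑' ν : {ν : F // ν ∉ Λ (n + 1)}, ENNReal.ofReal (a ν.1)) ^ p / (n + 1 : ℝ≥0∞)) ≠ ∞ := by
  have hz : ∀ ν, ENNReal.ofReal (a ν) ≠ 0 → ∃ N, ∀ n ≥ N, ν ∈ Λ n := by
    intro ν hν
    have hpos : 0 < a ν := by
      rw [Ne, ENNReal.ofReal_eq_zero, not_le] at hν
      exact hν
    have hfin : {μ | ¬ a μ < a ν}.Finite := ha0.eventually (gt_mem_nhds hpos)
    refine ⟨hfin.toFinset.card + 1, fun n hn => ?_⟩
    by_contra hc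
    have hsub : Λ n ⊆ hfin.toFinset := by
      intro κ hκ
      simpa using hmax n κ hκ ν hc
    have := Finset.card_le_card hsub
    rw [hcard] at this
    omega
  have hm := aux_main p hp0 hp1 (fun ν => ENNReal.ofReal (a ν)) (fun ν => ENNReal.ofReal_ne_top)
    Λ hcard (fun n ν hν μ hμ => ENNReal.ofReal_le_ofReal (hmax n ν hν μ hμ)) hz
  simp only [aux_term p t hp0 ht]
  rw [← hm]
  simp only [ENNReal.ofReal_rpow_of_nonneg (ha _) hp0.le]
end

section
/- Let 0 < p < 1 and let d = (d_j)_{j≥1} be a sequence of nonnegative real numbers with (d_j)_{j≥1} ∈ ℓ_p(ℕ) and Σ_{j≥1} d_j < 1. Then the family ((|ν|!/ν!) d^ν)_{ν∈F}, indexed by the set F of finitely supported sequences ν = (ν_j)_{j≥1} of nonnegative integers, belongs to ℓ_p(F); that is, Σ_{ν∈F} ((|ν|!/ν!) d^ν)^p < ∞. -/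
lemma aux_bounded (S : Finset (ℕ →₀ ℕ)) :
    ∃ N : ℕ, ∀ ν ∈ S, ν.support ⊆ Finset.range N ∧ (∀ j, ν j < N) ∧ (ν.sum fun _ k => k) < N := by
  classical
  induction S using Finset.induction_on with
  | empty => exact ⟨0, by simp⟩
  | insert a s _ ih =>
    obtain ⟨N, hN⟩ := ih
    have key : ∀ ν : ℕ →₀ ℕ, ∀ K, ν.support ⊆ Finset.range K → (ν.sum fun _ k => k) < K →
        ∀ j, ν j < K := by
      intro ν K h1 h2 j
      by_cases hj : j ∈ ν.support
      · refine lt_of_le_of_lt ?_ h2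
        exact Finset.single_le_sum (f := fun i => ν i) (fun _ _ => Nat.zero_le _) hj
      · have : ν j = 0 := by simpa using hj
        omega
    have h0 : ∀ ν ∈ insert a s, ν.support ⊆ Finset.range (N + (a.support.sup id + 1) + ((a.sum fun _ k => k) + 1))
        ∧ (ν.sum fun _ k => k) < N + (a.support.sup id + 1) + ((a.sum fun _ k => k) + 1) := by
      intro ν hν
      rcases Finset.mem_insert.1 hν with rfl | h
      · refine ⟨fun i hi => ?_, by omega⟩
        have : i ≤ ν.support.sup id := Finset.le_sup (f := id) hi
        rw [Finset.mem_range]; omega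
      · obtain ⟨h1, _, h3⟩ := hN ν h
        refine ⟨fun i hi => ?_, by omega⟩
        have := Finset.mem_range.1 (h1 hi)
        rw [Finset.mem_range]; omega
    exact ⟨_, fun ν hν => ⟨(h0 ν hν).1, key ν _ (h0 ν hν).1 (h0 ν hν).2, (h0 ν hν).2⟩⟩

lemma aux_multinomial (β : ℕ → ℝ) (hβ : ∀ j, 0 ≤ β j) (b : ℝ) (hb1 : b < 1)
    (hb : ∀ n, ∑ j ∈ Finset.range n, β j ≤ b) :
    Summable fun ν : ℕ →₀ ℕ =>
      ((((ν.sum fun _ k => k).factorial : ℝ) / (ν.prod fun _ k => (k.factorial : ℝ))) *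
        (ν.prod fun j k => β j ^ k)) := by
  classical
  have hb0 : 0 ≤ b := by simpa using hb 0
  refine summable_of_sum_le (c := (1 - b)⁻¹) ?_ ?_
  · intro ν
    refine mul_nonneg (div_nonneg (by positivity) ?_) ?_
    · exact Finset.prod_nonneg fun i _ => by positivity
    · exact Finset.prod_nonneg fun i _ => pow_nonneg (hβ i) _
  intro S
  obtain ⟨N, hN⟩ := aux_bounded S
  rw [← Finset.sum_fiberwise_of_maps_to (t := Finset.range N) (g := fun ν : ℕ →₀ ℕ => ν.sum fun _ k => k)
    (fun ν hν => Finset.mem_range.2 (hN ν hν).2.2)]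
  calc _ ≤ ∑ n ∈ Finset.range N, b ^ n := by
        refine Finset.sum_le_sum fun n _ => ?_
        refine le_trans ?_ (pow_le_pow_left₀ (Finset.sum_nonneg fun i _ => hβ i) (hb N) n)
        rw [Finset.sum_pow_eq_sum_piAntidiag]
        have hsub : Finset.image (fun ν : ℕ →₀ ℕ => (ν : ℕ → ℕ)) (Finset.filter (fun ν : ℕ →₀ ℕ => (ν.sum fun _ k => k) = n) S) ⊆
            (Finset.range N).piAntidiag n := by
          intro f hf
          obtain ⟨ν, hν, rfl⟩ := Finset.mem_image.1 hf
          obtain ⟨hν, hn⟩ := Finset.mem_filter.1 hν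
          rw [Finset.mem_piAntidiag]
          refine ⟨?_, fun i hi => (hN ν hν).1 (by simpa using hi)⟩
          rw [← hn]
          exact (Finsupp.sum_of_support_subset ν (hN ν hν).1 (fun _ k => k) (by simp)).symm
        refine le_trans ?_ (Finset.sum_le_sum_of_subset_of_nonneg hsub ?_)
        · rw [Finset.sum_image (fun a _ b _ h => DFunLike.coe_injective h)]
          refine Finset.sum_le_sum fun ν hν => le_of_eq ?_
          have hs := (hN ν (Finset.mem_filter.1 hν).1).1
          rw [Finsupp.prod_of_support_subset _ hs _ (by simp),
            Finsupp.prod_of_support_subset _ hs _ (by simp),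
            Finsupp.sum_of_support_subset _ hs _ (by simp)]
          congr 1
          rw [div_eq_iff (Finset.prod_ne_zero_iff.2 fun i _ => by positivity)]
          have := Nat.multinomial_spec (Finset.range N) ν
          rw [← this]
          push_cast
          ring
        · intro f _ _
          exact mul_nonneg (by positivity) (Finset.prod_nonneg fun i _ => pow_nonneg (hβ i) _)
    _ ≤ ∑' n, b ^ n := (summable_geometric_of_lt_one hb0 hb1).sum_le_tsum _ fun i _ => by positivity
    _ = _ := tsum_geometric_of_lt_one hb0 hb1

lemma aux_geometric (g : ℕ → ℝ) (hg : ∀ j, 0 ≤ g j) (c : ℝ) (hc1 : c < 1) (hgc : ∀ j, g j ≤ c)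
    (hs : Summable g) :
    Summable fun ν : ℕ →₀ ℕ => ν.prod fun j k => g j ^ k := by
  classical
  have hc : 0 < 1 - c := by linarith
  have hnn : ∀ ν : ℕ →₀ ℕ, 0 ≤ ν.prod fun j k => g j ^ k :=
    fun ν => Finset.prod_nonneg fun i _ => pow_nonneg (hg i) _
  refine summable_of_sum_le (c := Real.exp (∑' j, g j / (1 - c))) hnn ?_
  intro S
  obtain ⟨N, hN⟩ := aux_bounded S
  have hsub : S ⊆ (Finset.range N).finsupp fun _ => Finset.range N := by
    intro ν hν
    rw [Finset.mem_finsupp_iff]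
    exact ⟨(hN ν hν).1, fun i _ => Finset.mem_range.2 ((hN ν hν).2.1 i)⟩
  refine le_trans (Finset.sum_le_sum_of_subset_of_nonneg hsub fun ν _ _ => hnn ν) ?_
  have h1 : ∑ ν ∈ (Finset.range N).finsupp (fun _ => Finset.range N), (ν.prod fun j k => g j ^ k)
      = ∏ j ∈ Finset.range N, ∑ k ∈ Finset.range N, g j ^ k := by
    rw [Finset.prod_sum, Finset.finsupp, Finset.sum_map]
    refine Finset.sum_congr (by congr!) fun f _ => ?_
    change ((Finsupp.indicator (Finset.range N) f).prod fun j k => g j ^ k) = _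
    rw [Finsupp.prod_of_support_subset _ (Finsupp.support_indicator_subset _ _) _ (by simp),
      ← Finset.prod_attach]
    refine Finset.prod_congr rfl fun i _ => ?_
    simp [Finsupp.indicator_of_mem i.2]
  rw [h1]
  calc _ ≤ ∏ j ∈ Finset.range N, Real.exp (g j / (1 - c)) := by
        refine Finset.prod_le_prod (fun j _ => Finset.sum_nonneg fun k _ => pow_nonneg (hg j) k) ?_
        intro j _
        have hj1 : g j < 1 := (hgc j).trans_lt hc1
        have hj : 0 < 1 - g j := by linarith
        calc _ ≤ ∑' n, g j ^ n := (summable_geometric_of_lt_one (hg j) hj1).sum_le_tsum _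
              fun i _ => pow_nonneg (hg j) i
          _ = (1 - g j)⁻¹ := tsum_geometric_of_lt_one (hg j) hj1
          _ = g j / (1 - g j) + 1 := by field_simp; ring
          _ ≤ g j / (1 - c) + 1 := by
            have := div_le_div_of_nonneg_left (hg j) hc (by linarith [hgc j] : 1 - c ≤ 1 - g j)
            linarith
          _ ≤ _ := Real.add_one_le_exp _
    _ = Real.exp (∑ j ∈ Finset.range N, g j / (1 - c)) := (Real.exp_sum _ _).symm
    _ ≤ _ := Real.exp_le_exp.2 ((hs.div_const _).sum_le_tsum _ fun i _ => div_nonneg (hg i) hc.le)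

/-- **Cohen-DeVore-Schwab summability lemma.**  Let `0 < p < 1` and let `d = (d_j)_{j ≥ 1}`
be nonnegative reals with `(d_j) ∈ ℓ_p(ℕ)` and `Σ_j d_j < 1`.  Then the family
`((|ν|!/ν!) d^ν)_{ν ∈ F}`, indexed by the set `F = ℕ →₀ ℕ` of finitely supported
multi-indices, belongs to `ℓ_p(F)`; here `|ν| = Σ_j ν_j`, `ν! = Π_j ν_j!`, and
`d^ν = Π_j d_j^{ν_j}`. -/
theorem summability_factorial_family
    (p : ℝ) (hp0 : 0 < p) (hp1 : p < 1)
    (d : ℕ → ℝ) (hd0 : ∀ j, 0 ≤ d j)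
    (hdp : Summable fun j => d j ^ p)
    (hd1sum : Summable d) (hd1 : ∑' j, d j < 1) :
    Summable fun ν : ℕ →₀ ℕ =>
      ((((ν.sum fun _ k => k).factorial : ℝ) / (ν.prod fun _ k => (k.factorial : ℝ))) *
        (ν.prod fun j k => d j ^ k)) ^ p := by
  classical
  set D := ∑' j, d j with hD
  have hD0 : 0 ≤ D := tsum_nonneg hd0
  have hq : 0 < 1 - p := by linarith
  obtain ⟨e, he⟩ : ∃ e, e = (1 - D) / 2 := ⟨_, rfl⟩
  have he0 : 0 < e := by rw [he]; linarith
  have hdp0 : ∀ j, 0 ≤ d j ^ p := fun j => Real.rpow_nonneg (hd0 j) _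
  obtain ⟨J, hJ⟩ : ∃ J, ∑' k, d (k + J) ^ p < e :=
    ((tendsto_sum_nat_add fun j => d j ^ p).eventually (gt_mem_nhds he0)).exists
  set T := ∑' k, d (k + J) ^ p with hT
  obtain ⟨r, hr⟩ : ∃ r, r = (1 + e) ^ (-(p / (1 - p))) := ⟨_, rfl⟩
  have hr0 : 0 ≤ r := by rw [hr]; positivity
  have hr1 : r < 1 := by
    rw [hr]
    exact Real.rpow_lt_one_of_one_lt_of_neg (by linarith) (by have := div_pos hp0 hq; linarith)
  obtain ⟨β, hβ⟩ : ∃ β : ℕ → ℝ, ∀ j, β j = if j < J then (1 + e) * d j else d j ^ p := ⟨_, fun _ => rfl⟩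
  obtain ⟨g, hg⟩ : ∃ g : ℕ → ℝ, ∀ j, g j = if j < J then r else d j ^ p := ⟨_, fun _ => rfl⟩
  have hβ0 : ∀ j, 0 ≤ β j := by
    intro j; rw [hβ]; split_ifs
    · exact mul_nonneg (by linarith) (hd0 j)
    · exact hdp0 j
  have hg0 : ∀ j, 0 ≤ g j := by
    intro j; rw [hg]; split_ifs
    · exact hr0
    · exact hdp0 j
  have hdg : ∀ j, d j ^ p = β j ^ p * g j ^ (1 - p) := by
    intro j; rw [hβ, hg]; split_ifs
    · rw [Real.mul_rpow (by linarith) (hd0 j), hr, ← Real.rpow_mul (by linarith)]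
      have : -(p / (1 - p)) * (1 - p) = -p := by field_simp
      rw [this, mul_right_comm, ← Real.rpow_add (by linarith)]
      simp
    · rw [← Real.rpow_add_of_nonneg (hdp0 j) hp0.le hq.le]
      simp
  have hA := aux_multinomial β hβ0 (D + e + T) (by linarith) (by
    intro n
    have h1 : ∑ j ∈ Finset.range n, β j ≤ ∑ j ∈ Finset.range (J + n), β j :=
      Finset.sum_le_sum_of_subset_of_nonneg (Finset.range_mono (by omega)) fun i _ _ => hβ0 i
    rw [Finset.sum_range_add] at h1
    have h2 : ∑ j ∈ Finset.range J, β j = (1 + e) * ∑ j ∈ Finset.range J, d j := by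
      rw [Finset.mul_sum]
      exact Finset.sum_congr rfl fun j hj => by rw [hβ, if_pos (Finset.mem_range.1 hj)]
    have h3 : ∑ j ∈ Finset.range J, d j ≤ D := hd1sum.sum_le_tsum _ fun i _ => hd0 i
    have h4 : ∑ x ∈ Finset.range n, β (J + x) ≤ T := by
      have : ∀ x, β (J + x) = d (x + J) ^ p := fun x => by
        rw [hβ, if_neg (by omega), add_comm]
      simp only [this]
      exact ((summable_nat_add_iff J).2 hdp).sum_le_tsum _ fun i _ => hdp0 _
    nlinarith)
  have hgs : Summable g := by
    rw [← summable_nat_add_iff J]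
    refine ((summable_nat_add_iff J).2 hdp).congr fun x => ?_
    rw [hg, if_neg (by omega)]
  have hB := aux_geometric g hg0 (max r (D ^ p)) (max_lt hr1 (Real.rpow_lt_one hD0 hd1 hp0)) (by
    intro j; rw [hg]; split_ifs
    · exact le_max_left _ _
    · exact le_max_of_le_right (Real.rpow_le_rpow (hd0 j)
        (hd1sum.le_tsum j fun i _ => hd0 i) hp0.le)) hgs
  have hm : ∀ ν : ℕ →₀ ℕ, 0 ≤ ((ν.sum fun _ k => k).factorial : ℝ) / (ν.prod fun _ k => (k.factorial : ℝ)) :=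
    fun ν => div_nonneg (by positivity) (Finset.prod_nonneg fun i _ => by positivity)
  have hpr : ∀ f : ℕ → ℝ, (∀ j, 0 ≤ f j) → ∀ ν : ℕ →₀ ℕ, 0 ≤ ν.prod fun j k => f j ^ k :=
    fun f hf ν => Finset.prod_nonneg fun i _ => pow_nonneg (hf i) _
  refine Summable.of_nonneg_of_le (fun ν => ?_) (fun ν => ?_)
    ((hA.mul_left p).add (hB.mul_left (1 - p)))
  · exact Real.rpow_nonneg (mul_nonneg (hm ν) (hpr d hd0 ν)) _
  · refine le_trans (le_of_eq ?_) (Real.geom_mean_le_arith_mean2_weighted hp0.le hq.le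
      (mul_nonneg (hm ν) (hpr β hβ0 ν)) (hpr g hg0 ν) (by ring))
    rw [Real.mul_rpow (hm ν) (hpr d hd0 ν), Real.mul_rpow (hm ν) (hpr β hβ0 ν), mul_assoc]
    congr 1
    simp only [Finsupp.prod]
    rw [← Real.finsetProd_rpow _ _ (fun i _ => pow_nonneg (hd0 i) _),
      ← Real.finsetProd_rpow _ _ (fun i _ => pow_nonneg (hβ0 i) _),
      ← Real.finsetProd_rpow _ _ (fun i _ => pow_nonneg (hg0 i) _), ← Finset.prod_mul_distrib]
    refine Finset.prod_congr rfl fun i _ => ?_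
    rw [← Real.rpow_pow_comm (hd0 i), ← Real.rpow_pow_comm (hβ0 i), ← Real.rpow_pow_comm (hg0 i), ← mul_pow,
      hdg]
end

section
/- Let Y be a complex Banach space, let (w_j)_{j≥1} be positive reals, δ > 0, B ≥ 0, and let (v_ν)_{ν∈F} be a family in Y with the following property: for every sequence ρ = (ρ_j)_{j≥1} with ρ_j ≥ 1 for all j and Σ_{j≥1} (ρ_j − 1) w_j ≤ δ, one has ‖v_ν‖_Y ≤ B Π_{j≥1} ρ_j^{−ν_j} for all ν ∈ F. Then for every ν ∈ F with |ν| ≥ 1, ‖v_ν‖_Y ≤ B · (|ν|!/ν!) · Π_{j≥1} (e w_j/δ)^{ν_j}. -/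
/-- **Coefficient bound from Cauchy estimates with variable polyradii** (Cohen-DeVore,
Step 3 of the proof of Theorem 2.1).  Let `Y` be a complex Banach space, `(w_j)_{j ≥ 1}`
positive reals, `δ > 0`, `B ≥ 0`, and let `(v_ν)_{ν ∈ F}` (`F = ℕ →₀ ℕ` the finitely
supported multi-indices) satisfy: for every sequence `ρ = (ρ_j)` with `ρ_j ≥ 1` and
`Σ_j (ρ_j - 1) w_j ≤ δ` one has `‖v_ν‖ ≤ B Π_j ρ_j^{-ν_j}` for all `ν ∈ F`.  Then for
every `ν ∈ F` with `|ν| ≥ 1`, `‖v_ν‖ ≤ B (|ν|!/ν!) Π_j (e w_j / δ)^{ν_j}`. -/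
theorem coeff_bound_of_cauchy_estimates
    {Y : Type*} [NormedAddCommGroup Y] [NormedSpace ℂ Y]
    (w : ℕ → ℝ) (hw : ∀ j, 0 < w j) (δ : ℝ) (hδ : 0 < δ) (B : ℝ) (hB : 0 ≤ B)
    (v : (ℕ →₀ ℕ) → Y)
    (hv : ∀ ρ : ℕ → ℝ, (∀ j, 1 ≤ ρ j) →
      (Summable fun j => (ρ j - 1) * w j) → (∑' j, (ρ j - 1) * w j) ≤ δ →
      ∀ ν : ℕ →₀ ℕ, ‖v ν‖ ≤ B * ν.prod fun j k => (ρ j ^ k)⁻¹) :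
    ∀ ν : ℕ →₀ ℕ, 1 ≤ (ν.sum fun _ k => k) →
      ‖v ν‖ ≤ B * (((ν.sum fun _ k => k).factorial : ℝ) /
          (ν.prod fun _ k => (k.factorial : ℝ))) *
        (ν.prod fun j k => (Real.exp 1 * w j / δ) ^ k) := by
  intro ν hn
  have hsum : (ν.sum fun _ k => k) = ∑ j ∈ ν.support, ν j := rfl
  set n : ℕ := ν.sum fun _ k => k with hndef
  have hn0 : (0 : ℝ) < n := by exact_mod_cast hn
  have key := hv (fun j => 1 + δ * ν j / (n * w j))
    (fun j => by
      have : 0 ≤ δ * ν j / (n * w j) := by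
        have := hw j
        positivity
      linarith)
  have hterm : ∀ j, ((1 + δ * ν j / (n * w j)) - 1) * w j = δ / n * (ν j : ℝ) := by
    intro j
    have := (hw j).ne'
    field_simp
    ring
  simp only [hterm] at key
  have hz : ∀ j ∉ ν.support, δ / n * (ν j : ℝ) = 0 := by
    intro j hj
    rw [Finsupp.notMem_support_iff.mp hj]
    simp
  have hts : (∑' j, δ / n * (ν j : ℝ)) ≤ δ := by
    rw [tsum_eq_sum hz, ← Finset.mul_sum, ← Nat.cast_sum, ← hsum]
    exact (div_mul_cancel₀ δ hn0.ne').le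
  have h1 := key (summable_of_ne_finset_zero hz) hts ν
  refine h1.trans ?_
  rw [mul_assoc]
  refine mul_le_mul_of_nonneg_left ?_ hB
  simp only [Finsupp.prod]
  have h2 : ∏ j ∈ ν.support, ((1 + δ * ν j / (n * w j)) ^ ν j)⁻¹
      ≤ ∏ j ∈ ν.support, ((n : ℝ) ^ ν j * ((w j / δ) ^ ν j / (ν j).factorial)) := by
    refine Finset.prod_le_prod (fun j _ => ?_) (fun j hj => ?_)
    · have := hw j
      positivity
    · have hwj := hw j
      have hk : (0 : ℝ) < ν j := by
        exact_mod_cast Nat.pos_of_ne_zero (Finsupp.mem_support_iff.mp hj)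
      have hf : ((ν j).factorial : ℝ) ≤ (ν j : ℝ) ^ ν j := by
        exact_mod_cast Nat.factorial_le_pow (ν j)
      calc ((1 + δ * ν j / (n * w j)) ^ ν j)⁻¹
          ≤ ((δ * ν j / (n * w j)) ^ ν j)⁻¹ := by
            gcongr
            linarith
        _ = (n : ℝ) ^ ν j * ((w j / δ) ^ ν j / (ν j : ℝ) ^ ν j) := by
            rw [← inv_pow, ← div_pow, ← mul_pow]
            congr 1
            field_simp
        _ ≤ _ := by gcongr
  refine h2.trans ?_
  rw [Finset.prod_mul_distrib, Finset.prod_pow_eq_pow_sum, ← hsum, Finset.prod_div_distrib]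
  have h3 : ∏ j ∈ ν.support, (Real.exp 1 * w j / δ) ^ ν j
      = Real.exp n * ∏ j ∈ ν.support, (w j / δ) ^ ν j := by
    simp only [mul_div_assoc, mul_pow]
    rw [Finset.prod_mul_distrib, Finset.prod_pow_eq_pow_sum, ← hsum, ← Real.exp_nat_mul, mul_one]
  rw [h3]
  have h4 : (n : ℝ) ^ n ≤ n.factorial * Real.exp n := by
    have := Real.pow_div_factorial_le_exp (n : ℝ) hn0.le n
    rw [div_le_iff₀ (by positivity)] at this
    linarith
  have h5 : 0 ≤ (∏ j ∈ ν.support, (w j / δ) ^ ν j)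
      / ∏ j ∈ ν.support, ((ν j).factorial : ℝ) := by
    refine div_nonneg (Finset.prod_nonneg fun j _ => ?_) (Finset.prod_nonneg fun j _ => ?_)
    · have := hw j
      positivity
    · positivity
  refine (mul_le_mul_of_nonneg_right h4 h5).trans (le_of_eq ?_)
  ring
end
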